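/- arXiv:1907.00632 — 3 statements merged into one kernel-verified Lean document; each statement's English description precedes it below -/
import Mathlib

section
/- Fix an integer l ≥ 1. Let X_n^{(l)} be the number of blocks of size l in a uniformly random non-crossing partition of [n], and let Var(X_n^{(l)}) = (1/C_n)·Σ_{π ∈ NC(n)} k_l(π)² − ((1/C_n)·Σ_{π ∈ NC(n)} k_l(π))². Then Var(X_n^{(l)}) = (n/2^{2l+3})·(2^{l+2} − (l − 1)² − 2) + O(1); that is, there exists a constant K (possibly depending on l) such that |Var(X_n^{(l)}) − (n/2^{2l+3})·(2^{l+2} − (l − 1)² − 2)| ≤ K for all n ≥ 1. -/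
/-- A finite partition of `Fin n` (representing `[n] = {1, …, n}`) is *non-crossing* if
there are no indices `a < b < c < d` with `a, c` in one block and `b, d` in a
different block. -/
def IsNonCrossing {n : ℕ} (P : Finpartition (Finset.univ : Finset (Fin n))) : Prop :=
  ∀ a b c d : Fin n, a < b → b < c → c < d →
    ∀ B ∈ P.parts, ∀ B' ∈ P.parts,
      a ∈ B → c ∈ B → b ∈ B' → d ∈ B' → B = B'

/-- The type of non-crossing partitions of `[n]`. -/
def NCPart (n : ℕ) : Type :=
  {P : Finpartition (Finset.univ : Finset (Fin n)) // IsNonCrossing P}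

noncomputable instance (n : ℕ) : Fintype (NCPart n) :=
  Fintype.ofInjective (fun P => P.1.parts)
    (fun _ _ h => Subtype.ext (Finpartition.ext h))

/-- The number of blocks of a non-crossing partition. -/
def numBlocks {n : ℕ} (P : NCPart n) : ℕ := P.1.parts.card

/-- The number of blocks of size `l` of a non-crossing partition. -/
def numBlocksOfSize {n : ℕ} (l : ℕ) (P : NCPart n) : ℕ :=
  (P.1.parts.filter fun B => B.card = l).card

/-- The variance of the number of blocks of size `l` of a uniformly random non-crossing
partition of `[n]`. -/
noncomputable def varBlocksOfSize (l n : ℕ) : ℝ :=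
  (∑ π : NCPart n, (numBlocksOfSize l π : ℝ) ^ 2) / (Fintype.card (NCPart n) : ℝ) -
    ((∑ π : NCPart n, (numBlocksOfSize l π : ℝ)) / (Fintype.card (NCPart n) : ℝ)) ^ 2

/-!
Reading off block sizes at the least elements of the blocks encodes a non-crossing partition of
`[n]` as a Łukasiewicz word: a sequence of `n + 1` naturals with sum `n` whose associated path stays
non-negative up to time `n`. By the cycle lemma exactly one cyclic shift of any sequence of `n + 1`
naturals with sum `n` is such a word, and shifts do not change how often the value `l` occurs.
Hence `X_n^{(l)}` has the distribution of the number of parts equal to `l` in a uniformly random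
weak composition of `n` into `n + 1` parts, and its variance is
`(n + 1) p_1 + n (n + 1) p_2 - (n + 1)² p_1²`, where `p_k` is the probability that `k` given parts
equal `l`. Each `p_k` is a product of boundedly many ratios of linear functions of `n`, hence is
known up to `O(1 / n²)`; the leading terms of `p_2` and `p_1²` agree, and the `1 / n` terms give the
linear growth.
-/

open Finset

section Paths

/-- For a path `h`, the last time `j ≤ i` with `h j ≤ h (i + 1)`. When `h` is the height function of
the Łukasiewicz word of a non-crossing partition, this is the least element of the block of `i`.
The value is `0` if there is no such time. -/
def opener (h : ℕ → ℤ) (i : ℕ) : ℕ := Nat.findGreatest (fun j => h j ≤ h (i + 1)) i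

variable {h : ℕ → ℤ} {i j n : ℕ}

lemma opener_le (h : ℕ → ℤ) (i : ℕ) : opener h i ≤ i := Nat.findGreatest_le i

lemma apply_opener_le (h0 : h 0 ≤ h (i + 1)) : h (opener h i) ≤ h (i + 1) :=
  Nat.findGreatest_spec (P := fun j => h j ≤ h (i + 1)) (Nat.zero_le i) h0

lemma lt_of_opener_lt (hj : opener h i < j) (hji : j ≤ i) : h (i + 1) < h j :=
  not_le.1 (Nat.findGreatest_is_greatest hj hji)

lemma opener_eq_of_le_of_lt (hji : j ≤ i) (hj : h j ≤ h (i + 1))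
    (hlt : ∀ k, j < k → k ≤ i → h (i + 1) < h k) : opener h i = j :=
  Nat.findGreatest_eq_iff.2 ⟨hji, fun _ => hj, fun k hjk hki => not_le.2 (hlt k hjk hki)⟩

lemma lt_opener_of_opener_lt_opener (h0 : h 0 ≤ h (j + 1)) (hij : i < j)
    (ho : opener h i < opener h j) : i < opener h j := by
  by_contra! hle
  exact (lt_of_opener_lt ho hle).not_ge
    ((apply_opener_le h0).trans (lt_of_opener_lt (hle.trans_lt i.lt_succ_self) hij).le)

lemma opener_opener (h0 : h 0 ≤ h (i + 1)) : opener h (opener h i) = opener h i := by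
  obtain heq | hlt := (opener_le h i).eq_or_lt
  · rw [heq, heq]
  · refine (opener_le h _).eq_of_not_lt fun ho => ?_
    exact (lt_opener_of_opener_lt_opener h0 hlt ho).false

lemma exists_first_passage (hstep : ∀ k, h k - 1 ≤ h (k + 1)) {v : ℤ} (hjn : j < n)
    (hn : h n ≤ v) (hv : v ≤ h (j + 1)) :
    ∃ i, j ≤ i ∧ i < n ∧ h (i + 1) = v ∧ ∀ k, j < k → k ≤ i → v < h k := by
  classical
  have hex : ∃ i, j ≤ i ∧ h (i + 1) ≤ v :=
    ⟨n - 1, Nat.le_sub_one_of_lt hjn, by rwa [Nat.sub_add_cancel (Nat.zero_lt_of_lt hjn)]⟩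
  have hbefore : ∀ k, j < k → k ≤ Nat.find hex → v < h k := by
    intro k hjk hk
    have := Nat.find_min hex (m := k - 1) (by omega)
    rw [Nat.sub_add_cancel (by omega)] at this
    exact not_le.1 fun hkv => this ⟨by omega, hkv⟩
  obtain ⟨hji, hiv⟩ := Nat.find_spec hex
  refine ⟨Nat.find hex, hji, ?_, hiv.antisymm ?_, hbefore⟩
  · have := Nat.find_min' hex (m := n - 1)
      ⟨Nat.le_sub_one_of_lt hjn, by rwa [Nat.sub_add_cancel (Nat.zero_lt_of_lt hjn)]⟩
    omega
  · obtain heq | hlt := hji.eq_or_lt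
    · rwa [← heq]
    · linarith [hbefore _ hlt le_rfl, hstep (Nat.find hex)]

-- `i ↦ h (i + 1)` is a bijection from the times opened at `j` to the levels `h j, …, h (j + 1)`.
lemma card_filter_opener_eq (hstep : ∀ k, h k - 1 ≤ h (k + 1)) (h0 : ∀ k ≤ n, h 0 ≤ h k)
    (hn : h n ≤ h 0) (hj : j < n) :
    (#{i ∈ range n | opener h i = j} : ℤ) = h (j + 1) - h j + 1 := by
  have hcard : #{i ∈ range n | opener h i = j} = #(Icc (h j) (h (j + 1))) := by
    refine card_nbij (fun i => h (i + 1)) ?_ ?_ ?_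
    · intro i hi
      obtain ⟨hin, rfl⟩ : i < n ∧ opener h i = j := by simpa using hi
      refine mem_coe.2 (mem_Icc.2 ⟨apply_opener_le (h0 _ hin), ?_⟩)
      obtain heq | hlt := (opener_le h i).eq_or_lt
      · rw [heq]
      · exact (lt_of_opener_lt (Nat.lt_succ_self _) hlt).le
    · have hanti : ∀ i i', opener h i = j → opener h i' = j → i < i' → h (i' + 1) < h (i + 1) :=
        fun i i' hi hi' hlt =>
          lt_of_opener_lt (by rw [hi', ← hi]; exact Nat.lt_succ_of_le (opener_le h i)) hlt
      intro i hi i' hi' heq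
      simp only [coe_filter, Set.mem_ofPred_eq] at hi hi'
      obtain hlt | rfl | hlt := lt_trichotomy i i'
      · exact absurd heq (hanti i i' hi.2 hi'.2 hlt).ne'
      · rfl
      · exact absurd heq (hanti i' i hi'.2 hi.2 hlt).ne
    · intro v hv
      obtain ⟨hjv, hvj⟩ := mem_Icc.1 (mem_coe.1 hv)
      obtain ⟨i, hji, hin, rfl, hbefore⟩ :=
        exists_first_passage hstep hj (hn.trans ((h0 j hj.le).trans hjv)) hvj
      exact ⟨i, by simpa [hin] using opener_eq_of_le_of_lt hji hjv hbefore, rfl⟩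
  rw [hcard, Int.card_Icc, Int.toNat_of_nonneg] <;> linarith [hstep j]

/-- The cycle lemma of Dvoretzky and Motzkin. -/
lemma existsUnique_forall_le_of_add_period {N : ℕ} [NeZero N]
    (hper : ∀ k, h (N + k) = h k - 1) :
    ∃! r : Fin N, ∀ k < N, h r ≤ h (r + k) := by
  have hmin : ∃ r < N, (∀ k < N, h r ≤ h k) ∧ ∀ k < r, h r < h k := by
    classical
    obtain ⟨s, hs, hsmin⟩ := exists_min_image (range N) h ⟨0, mem_range.2 (NeZero.pos N)⟩
    have hex : ∃ r, r < N ∧ ∀ k < N, h r ≤ h k :=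
      ⟨s, mem_range.1 hs, fun k hk => hsmin k (mem_range.2 hk)⟩
    obtain ⟨hr, hrmin⟩ := Nat.find_spec hex
    refine ⟨Nat.find hex, hr, hrmin, fun k hk => (hrmin k (hk.trans hr)).lt_of_ne fun heq => ?_⟩
    exact Nat.find_min hex hk ⟨hk.trans hr, fun m hm => heq ▸ hrmin m hm⟩
  obtain ⟨r, hr, hrmin, hrlt⟩ := hmin
  refine existsUnique_of_exists_of_unique ⟨⟨r, hr⟩, fun k hk => ?_⟩ ?_
  · obtain hlt | hge := lt_or_ge (r + k) N
    · exact hrmin _ hlt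
    · obtain ⟨j, hj⟩ := Nat.exists_eq_add_of_le hge
      have := hrlt j (by omega)
      simp only [hj, hper]
      omega
  · have hnot : ∀ a b : Fin N, (a : ℕ) < b → (∀ k < N, h a ≤ h (a + k)) →
        ¬ ∀ k < N, h b ≤ h (b + k) := by
      intro a b hab ha hb
      have hab_le := ha (b - a) (by omega)
      have hba_le := hb (N + a - b) (by omega)
      rw [show (a : ℕ) + (b - a) = b by omega] at hab_le
      rw [show (b : ℕ) + (N + a - b) = N + a by omega, hper] at hba_le
      omega
    intro a b ha hb
    obtain hlt | heq | hlt := lt_trichotomy a b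
    · exact absurd hb (hnot a b hlt ha)
    · exact heq
    · exact absurd ha (hnot b a hlt hb)

end Paths

section BlockMin

variable {α : Type*} [LinearOrder α] [Fintype α]

/-- The least element of the block of `x`; a partition is encoded by this function. -/
def blockMin (P : Finpartition (univ : Finset α)) (x : α) : α :=
  (P.part x).min' (P.part_nonempty.2 (mem_univ x))

lemma blockMin_mem_part (P : Finpartition (univ : Finset α)) (x : α) : blockMin P x ∈ P.part x :=
  min'_mem _ _

lemma blockMin_le (P : Finpartition (univ : Finset α)) (x : α) : blockMin P x ≤ x :=
  min'_le _ _ (P.mem_part_self.2 (mem_univ x))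

lemma part_blockMin (P : Finpartition (univ : Finset α)) (x : α) :
    P.part (blockMin P x) = P.part x :=
  P.part_eq_of_mem (P.part_mem.2 (mem_univ x)) (blockMin_mem_part P x)

lemma blockMin_eq_blockMin_iff {P : Finpartition (univ : Finset α)} {x y : α} :
    blockMin P x = blockMin P y ↔ P.part x = P.part y := by
  refine ⟨fun hxy => ?_, fun hxy => by simp only [blockMin, hxy]⟩
  rw [← part_blockMin P x, hxy, part_blockMin]

lemma mem_part_iff_blockMin_eq {P : Finpartition (univ : Finset α)} {x y : α} :
    y ∈ P.part x ↔ blockMin P y = blockMin P x := by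
  rw [blockMin_eq_blockMin_iff, P.mem_part_iff_part_eq_part (mem_univ y) (mem_univ x)]

lemma blockMin_blockMin (P : Finpartition (univ : Finset α)) (x : α) :
    blockMin P (blockMin P x) = blockMin P x :=
  blockMin_eq_blockMin_iff.2 (part_blockMin P x)

lemma image_part_univ (P : Finpartition (univ : Finset α)) : univ.image P.part = P.parts := by
  ext B
  simp only [mem_image, mem_univ, true_and]
  constructor
  · rintro ⟨x, rfl⟩
    exact P.part_mem.2 (mem_univ x)
  · intro hB
    obtain ⟨x, hx⟩ := P.nonempty_of_mem_parts hB
    exact ⟨x, P.part_eq_of_mem hB hx⟩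

lemma blockMin_injective :
    Function.Injective (blockMin : Finpartition (univ : Finset α) → α → α) := by
  intro P Q hPQ
  have hpart : P.part = Q.part := by
    funext x
    ext y
    rw [mem_part_iff_blockMin_eq, mem_part_iff_blockMin_eq, hPQ]
  exact Finpartition.ext (by rw [← image_part_univ P, ← image_part_univ Q, hpart])

lemma blockMin_ofSetoid_ker {f : α → α} [DecidableRel (Setoid.ker f).r] (hle : ∀ x, f x ≤ x)
    (hidem : ∀ x, f (f x) = f x) : blockMin (Finpartition.ofSetoid (Setoid.ker f)) = f := by
  have hmem : ∀ {x y}, y ∈ (Finpartition.ofSetoid (Setoid.ker f)).part x ↔ f x = f y :=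
    Finpartition.mem_part_ofSetoid_iff_rel
  funext x
  refine le_antisymm (min'_le _ _ (hmem.2 (hidem x).symm)) ?_
  rw [hmem.1 (blockMin_mem_part _ x)]
  exact hle _

lemma card_filter_parts (P : Finpartition (univ : Finset α)) (p : Finset α → Prop)
    [DecidablePred p] :
    #{B ∈ P.parts | p B} = #{x | blockMin P x = x ∧ p (P.part x)} := by
  symm
  refine card_nbij P.part ?_ ?_ ?_
  · intro x hx
    simp only [coe_filter, mem_univ, true_and, Set.mem_ofPred_eq] at hx ⊢
    exact ⟨P.part_mem.2 (mem_univ x), hx.2⟩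
  · intro x hx y hy hxy
    simp only [coe_filter, mem_univ, true_and, Set.mem_ofPred_eq] at hx hy
    rw [← hx.1, ← hy.1, blockMin_eq_blockMin_iff, hxy]
  · intro B hB
    simp only [coe_filter, Set.mem_ofPred_eq, ← image_part_univ, mem_image, mem_univ,
      true_and] at hB
    obtain ⟨⟨x, rfl⟩, hp⟩ := hB
    exact ⟨blockMin P x, by simp [blockMin_blockMin, part_blockMin, hp], part_blockMin P x⟩

end BlockMin

section LukasiewiczWords

variable {n : ℕ}

lemma isNonCrossing_iff_lt_blockMin {P : Finpartition (univ : Finset (Fin n))} :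
    IsNonCrossing P ↔ ∀ i j, i < j → blockMin P i < blockMin P j → i < blockMin P j := by
  constructor
  · intro hP i j hij hlt
    by_contra! hle
    have hne : blockMin P j ≠ i := fun heq => by
      rw [← heq, blockMin_blockMin] at hlt
      exact hlt.false
    have hpart := hP _ _ _ _ hlt (hle.lt_of_ne hne) hij _ (P.part_mem.2 (mem_univ i)) _
      (P.part_mem.2 (mem_univ j)) (blockMin_mem_part P i) (P.mem_part_self.2 (mem_univ i))
      (blockMin_mem_part P j) (P.mem_part_self.2 (mem_univ j))
    exact hlt.ne (blockMin_eq_blockMin_iff.2 hpart)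
  · intro hP a b c d hab hbc hcd B hB B' hB' ha hc hb hd
    obtain rfl := P.part_eq_of_mem hB ha
    obtain rfl := P.part_eq_of_mem hB' hb
    rw [mem_part_iff_blockMin_eq] at hc hd
    rw [← blockMin_eq_blockMin_iff]
    obtain hlt | heq | hlt := lt_trichotomy (blockMin P a) (blockMin P b)
    · have := hP c d hcd (by rwa [hc, hd])
      exact absurd (this.trans_le (hd.trans_le (blockMin_le P b))) hbc.not_gt
    · exact heq
    · have := hP b c hbc (by rwa [hc])
      exact absurd (this.trans_le (hc.trans_le (blockMin_le P a))) hab.not_gt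

/-- The path with steps `x i - 1`, where `x` is extended periodically. -/
def height (x : Fin (n + 1) → ℕ) (k : ℕ) : ℤ := ∑ i ∈ range k, ((x (Fin.ofNat (n + 1) i) : ℤ) - 1)

lemma height_zero (x : Fin (n + 1) → ℕ) : height x 0 = 0 := sum_range_zero _

lemma height_succ (x : Fin (n + 1) → ℕ) (k : ℕ) :
    height x (k + 1) = height x k + (x (Fin.ofNat (n + 1) k) - 1) :=
  sum_range_succ _ _

lemma height_sub_one_le (x : Fin (n + 1) → ℕ) (k : ℕ) : height x k - 1 ≤ height x (k + 1) := by
  rw [height_succ]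
  omega

lemma height_period (x : Fin (n + 1) → ℕ) : height x (n + 1) = ∑ i, (x i : ℤ) - (n + 1) := by
  simp [height, sum_range, Fin.ofNat_eq_cast]

lemma height_period_add (x : Fin (n + 1) → ℕ) (k : ℕ) :
    height x (n + 1 + k) = height x (n + 1) + height x k := by
  have hper : ∀ i, Fin.ofNat (n + 1) (n + 1 + i) = Fin.ofNat (n + 1) i := fun i => by
    apply Fin.ext; simp
  simp only [height, sum_range_add, hper]

/-- The Łukasiewicz words of length `n + 1`: sequences of naturals with sum `n` whose partial sums
satisfy `x 0 + ⋯ + x (k - 1) ≥ k` for all `k ≤ n`. -/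
def lukasiewiczWords (n : ℕ) : Finset (Fin (n + 1) → ℕ) :=
  {x ∈ piAntidiag univ n | ∀ k ≤ n, 0 ≤ height x k}

lemma mem_lukasiewiczWords {x : Fin (n + 1) → ℕ} :
    x ∈ lukasiewiczWords n ↔ ∑ i, x i = n ∧ ∀ k ≤ n, 0 ≤ height x k := by
  simp [lukasiewiczWords]

lemma height_eq_zero_and_last_eq_zero {x : Fin (n + 1) → ℕ} (hx : x ∈ lukasiewiczWords n) :
    height x n = 0 ∧ x (Fin.last n) = 0 := by
  obtain ⟨hsum, hnonneg⟩ := mem_lukasiewiczWords.1 hx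
  have hn := hnonneg n le_rfl
  have hperiod : height x (n + 1) = -1 := by
    rw [height_period, ← Nat.cast_sum, hsum]
    ring
  rw [height_succ, Fin.ofNat_eq_cast, Fin.natCast_eq_last] at hperiod
  omega

/-- The Łukasiewicz word of a partition of `[n]`: the entry at `i` is the size of the block with
least element `i`, and `0` if there is no such block. The entry at the extra index `n` is `0`. -/
def lukasiewiczWord (P : Finpartition (univ : Finset (Fin n))) (i : Fin (n + 1)) : ℕ :=
  #{x | (blockMin P x).castSucc = i}

lemma lukasiewiczWord_castSucc (P : Finpartition (univ : Finset (Fin n))) (x : Fin n) :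
    lukasiewiczWord P x.castSucc = if blockMin P x = x then #(P.part x) else 0 := by
  simp only [lukasiewiczWord, Fin.castSucc_inj]
  split_ifs with hx
  · congr 1
    ext y
    rw [mem_filter_univ, mem_part_iff_blockMin_eq, hx]
  · refine card_eq_zero.2 (filter_eq_empty_iff.2 fun y _ hy => hx ?_)
    rw [← hy, blockMin_blockMin]

lemma lukasiewiczWord_last (P : Finpartition (univ : Finset (Fin n))) :
    lukasiewiczWord P (Fin.last n) = 0 := by
  simp [lukasiewiczWord, Fin.castSucc_ne_last]

lemma sum_lukasiewiczWord (P : Finpartition (univ : Finset (Fin n))) :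
    ∑ i, lukasiewiczWord P i = n := by
  simp only [lukasiewiczWord]
  rw [← card_eq_sum_card_fiberwise fun _ _ => mem_coe.2 (mem_univ _), card_univ, Fintype.card_fin]

lemma height_lukasiewiczWord (P : Finpartition (univ : Finset (Fin n))) {k : ℕ} (hk : k ≤ n) :
    height (lukasiewiczWord P) k = #{x : Fin n | ((blockMin P x : Fin n) : ℕ) < k ∧ k ≤ x} := by
  have hstarted : ∑ i ∈ range k, lukasiewiczWord P (Fin.ofNat (n + 1) i) =
      #{x : Fin n | ((blockMin P x : Fin n) : ℕ) < k} := by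
    rw [card_eq_sum_card_fiberwise (f := fun x => ((blockMin P x : Fin n) : ℕ)) (t := range k)
      fun x hx => by simpa using hx]
    refine sum_congr rfl fun i hi => ?_
    have hik := mem_range.1 hi
    rw [lukasiewiczWord, filter_filter]
    congr 1
    ext x
    simp only [mem_filter_univ, Fin.ext_iff, Fin.val_castSucc, Fin.val_ofNat,
      Nat.mod_eq_of_lt (show i < n + 1 by omega)]
    omega
  have hpassed : #{x : Fin n | (x : ℕ) < k} = k := by
    rw [Fin.card_filter_val_lt, min_eq_right hk]
  have hsubset : ({x : Fin n | (x : ℕ) < k} : Finset _) ⊆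
      ({x : Fin n | ((blockMin P x : Fin n) : ℕ) < k} : Finset _) :=
    monotone_filter_right _ fun x _ hx => (Fin.le_def.1 (blockMin_le P x)).trans_lt hx
  have hopen : ({x : Fin n | ((blockMin P x : Fin n) : ℕ) < k ∧ k ≤ x} : Finset _) =
      ({x : Fin n | ((blockMin P x : Fin n) : ℕ) < k} : Finset _) \
        ({x : Fin n | (x : ℕ) < k} : Finset _) := by
    ext x
    simp
  rw [hopen, cast_card_sdiff hsubset, hpassed, ← hstarted, height]
  simp

lemma lukasiewiczWord_mem (P : Finpartition (univ : Finset (Fin n))) :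
    lukasiewiczWord P ∈ lukasiewiczWords n :=
  mem_lukasiewiczWords.2 ⟨sum_lukasiewiczWord P, fun k hk => by
    rw [height_lukasiewiczWord P hk]
    positivity⟩

lemma opener_height_lukasiewiczWord {P : Finpartition (univ : Finset (Fin n))}
    (hP : IsNonCrossing P) (i : Fin n) :
    opener (height (lukasiewiczWord P)) i = blockMin P i := by
  rw [isNonCrossing_iff_lt_blockMin] at hP
  have hmin : ((blockMin P i : Fin n) : ℕ) ≤ i := blockMin_le P i
  refine opener_eq_of_le_of_lt hmin ?_ fun k hik hki => ?_
  · rw [height_lukasiewiczWord P (blockMin P i).2.le, height_lukasiewiczWord P i.2]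
    refine Nat.cast_le.2 (card_le_card (monotone_filter_right _ fun x _ ⟨hx, hix⟩ => ?_))
    refine ⟨by omega, ?_⟩
    obtain hlt | rfl | hlt := lt_trichotomy x i
    · exact absurd (hP x i hlt hx) (not_lt.2 hix)
    · exact absurd hx (lt_irrefl _)
    · exact hlt
  · rw [height_lukasiewiczWord P (hki.trans i.2.le), height_lukasiewiczWord P i.2]
    refine Nat.cast_lt.2 (card_lt_card (ssubset_iff_of_subset ?_ |>.2 ⟨i, ?_, ?_⟩))
    · refine monotone_filter_right _ fun x _ ⟨hx, hix⟩ => ⟨?_, by omega⟩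
      by_contra! hkx
      have := Fin.lt_def.1 (hP i x hix (Fin.lt_def.2 (hik.trans_le hkx)))
      exact absurd hx (Nat.not_lt.2 this)
    · simpa using ⟨hik, hki⟩
    · simp

lemma lukasiewiczWord_injOn :
    Set.InjOn (lukasiewiczWord (n := n)) {P | IsNonCrossing P} := by
  intro P hP Q hQ hPQ
  refine blockMin_injective (funext fun i => Fin.ext ?_)
  rw [← opener_height_lukasiewiczWord hP, ← opener_height_lukasiewiczWord hQ, hPQ]

lemma exists_lukasiewiczWord_eq {x : Fin (n + 1) → ℕ} (hx : x ∈ lukasiewiczWords n) :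
    ∃ P, IsNonCrossing P ∧ lukasiewiczWord P = x := by
  classical
  obtain ⟨hend, hlast⟩ := height_eq_zero_and_last_eq_zero hx
  have h0 : ∀ k ≤ n, height x 0 ≤ height x k := by
    rw [height_zero]
    exact (mem_lukasiewiczWords.1 hx).2
  let f : Fin n → Fin n := fun i => ⟨opener (height x) i, (opener_le _ _).trans_lt i.2⟩
  have hmin : blockMin (Finpartition.ofSetoid (Setoid.ker f)) = f :=
    blockMin_ofSetoid_ker (fun i => opener_le _ _) fun i => Fin.ext (opener_opener (h0 _ i.2))
  refine ⟨Finpartition.ofSetoid (Setoid.ker f), isNonCrossing_iff_lt_blockMin.2 ?_, ?_⟩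
  · rw [hmin]
    exact fun i j => lt_opener_of_opener_lt_opener (h0 _ j.2)
  · funext i
    induction i using Fin.lastCases with
    | last => rw [lukasiewiczWord_last, hlast]
    | cast i =>
      have hcard : #{y : Fin n | f y = i} = #{j ∈ range n | opener (height x) j = i} := by
        simp only [card_filter, Fin.ext_iff]
        exact Fin.sum_univ_eq_sum_range (fun j => if opener (height x) j = i then 1 else 0) n
      have hcount := card_filter_opener_eq (height_sub_one_le x) h0 (by rw [hend, height_zero]) i.2
      rw [height_succ] at hcount
      simp only [lukasiewiczWord, Fin.castSucc_inj, hmin, hcard]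
      have hi : Fin.ofNat (n + 1) i = i.castSucc := by simp
      rw [hi] at hcount
      omega

lemma card_filter_card_eq_card_filter_lukasiewiczWord (P : Finpartition (univ : Finset (Fin n)))
    {l : ℕ} (hl : l ≠ 0) :
    #{B ∈ P.parts | #B = l} = #{i | lukasiewiczWord P i = l} := by
  rw [card_filter_parts, Fin.univ_castSuccEmb, filter_cons, if_neg, filter_map, card_map]
  · congr 1
    ext x
    simp only [mem_filter_univ, Function.comp_apply, Fin.castSuccEmb_apply,
      lukasiewiczWord_castSucc]
    grind
  · rw [lukasiewiczWord_last]
    exact hl.symm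

lemma sum_ncPart_eq_sum_lukasiewiczWords {M : Type*} [AddCommMonoid M] {l : ℕ} (hl : l ≠ 0)
    (F : ℕ → M) :
    ∑ π : NCPart n, F (numBlocksOfSize l π) = ∑ x ∈ lukasiewiczWords n, F #{i | x i = l} := by
  refine sum_nbij (fun π => lukasiewiczWord π.1) (fun π _ => lukasiewiczWord_mem π.1) ?_ ?_ ?_
  · exact fun π _ ρ _ h => Subtype.ext (lukasiewiczWord_injOn π.2 ρ.2 h)
  · intro x hx
    obtain ⟨P, hP, rfl⟩ := exists_lukasiewiczWord_eq (mem_coe.1 hx)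
    exact ⟨⟨P, hP⟩, mem_coe.2 (mem_univ _), rfl⟩
  · exact fun π _ => congrArg F (card_filter_card_eq_card_filter_lukasiewiczWord π.1 hl)

/-- Cyclic shift of a sequence by `r` places. -/
def cyclicShift {N : ℕ} [NeZero N] {β : Type*} (r : Fin N) : (Fin N → β) ≃ (Fin N → β) :=
  (Equiv.addRight r).symm.arrowCongr (Equiv.refl β)

lemma cyclicShift_apply {N : ℕ} [NeZero N] {β : Type*} (r : Fin N) (x : Fin N → β) (i : Fin N) :
    cyclicShift r x i = x (i + r) := rfl

lemma sum_cyclicShift {N : ℕ} [NeZero N] {M : Type*} [AddCommMonoid M] (r : Fin N) (x : Fin N → M) :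
    ∑ i, cyclicShift r x i = ∑ i, x i :=
  Equiv.sum_comp (Equiv.addRight r) x

lemma card_filter_cyclicShift_eq {N : ℕ} [NeZero N] {β : Type*} [DecidableEq β] (r : Fin N)
    (x : Fin N → β) (b : β) : #{i | cyclicShift r x i = b} = #{i | x i = b} :=
  card_equiv (Equiv.addRight r) (fun i => by
    rw [mem_filter_univ, mem_filter_univ, cyclicShift_apply, Equiv.coe_addRight])

lemma height_cyclicShift (r : Fin (n + 1)) (x : Fin (n + 1) → ℕ) (k : ℕ) :
    height (cyclicShift r x) k = height x (r + k) - height x r := by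
  have hshift : ∀ i, Fin.ofNat (n + 1) (r + i) = Fin.ofNat (n + 1) i + r := fun i => by
    apply Fin.ext
    simp [Fin.val_add, add_comm]
  simp only [height, sum_range_add, hshift, cyclicShift_apply, add_sub_cancel_left]

lemma existsUnique_cyclicShift_mem_lukasiewiczWords {x : Fin (n + 1) → ℕ} (hx : ∑ i, x i = n) :
    ∃! r, cyclicShift r x ∈ lukasiewiczWords n := by
  simp only [mem_lukasiewiczWords, sum_cyclicShift, hx, true_and, height_cyclicShift, sub_nonneg,
    ← Nat.lt_succ_iff]
  refine existsUnique_forall_le_of_add_period fun k => ?_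
  rw [height_period_add, height_period, ← Nat.cast_sum, hx]
  ring

lemma sum_piAntidiag_eq_nsmul_sum_lukasiewiczWords {M : Type*} [AddCommMonoid M]
    {F : (Fin (n + 1) → ℕ) → M} (hF : ∀ r x, F (cyclicShift r x) = F x) :
    ∑ x ∈ piAntidiag univ n, F x = (n + 1) • ∑ x ∈ lukasiewiczWords n, F x := by
  have hshift : ∀ x ∈ piAntidiag univ n,
      F x = ∑ r with cyclicShift r x ∈ lukasiewiczWords n, F x := by
    intro x hx
    obtain ⟨r, hr, huniq⟩ :=
      existsUnique_cyclicShift_mem_lukasiewiczWords (mem_piAntidiag.1 hx).1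
    rw [show ({r | cyclicShift r x ∈ lukasiewiczWords n} : Finset _) = {r} by
      ext s; simpa using ⟨huniq s, fun h => h ▸ hr⟩, sum_singleton]
  calc ∑ x ∈ piAntidiag univ n, F x
      = ∑ x ∈ piAntidiag univ n, ∑ r with cyclicShift r x ∈ lukasiewiczWords n, F x :=
        sum_congr rfl hshift
    _ = ∑ r, ∑ x ∈ (lukasiewiczWords n).map (cyclicShift r).symm.toEmbedding, F x := by
        refine sum_comm' fun x r => ?_
        simp only [mem_filter_univ, mem_univ, and_true, mem_map_equiv, Equiv.symm_symm,
          and_iff_right_iff_imp]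
        intro hx
        simpa [sum_cyclicShift] using (mem_lukasiewiczWords.1 hx).1
    _ = ∑ _r : Fin (n + 1), ∑ x ∈ lukasiewiczWords n, F x := by
        refine sum_congr rfl fun r _ => ?_
        rw [sum_map]
        refine sum_congr rfl fun x _ => ?_
        rw [← hF r, Equiv.coe_toEmbedding, Equiv.apply_symm_apply]
    _ = (n + 1) • ∑ x ∈ lukasiewiczWords n, F x := by
        rw [sum_const, card_univ, Fintype.card_fin]

end LukasiewiczWords

section Counting

variable {ι : Type*} [DecidableEq ι] {s t : Finset ι}

lemma card_piAntidiag (s : Finset ι) (m : ℕ) : #(piAntidiag s m) = (#s).multichoose m := by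
  rw [← card_finsuppAntidiag_nat_eq_multichoose, finsuppAntidiag, card_map, card_attach]

lemma card_filter_piAntidiag_eqOn (hts : t ⊆ s) {m : ℕ} {g : ι → ℕ} (hg : ∑ i ∈ t, g i ≤ m) :
    #{x ∈ piAntidiag s m | ∀ i ∈ t, x i = g i} =
      (#(s \ t)).multichoose (m - ∑ i ∈ t, g i) := by
  rw [← card_piAntidiag]
  refine card_nbij' (fun x => t.piecewise 0 x) (fun x => t.piecewise g x) ?_ ?_ ?_ ?_
  · intro x hx
    simp only [coe_filter, mem_piAntidiag, Set.mem_ofPred_eq] at hx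
    obtain ⟨⟨hsum, hsupp⟩, heq⟩ := hx
    rw [← sum_sdiff hts, sum_congr rfl heq] at hsum
    simp only [mem_coe, mem_piAntidiag, mem_sdiff]
    refine ⟨?_, fun i hi => ?_⟩
    · rw [sum_piecewise, sdiff_inter_self, sum_empty, Finset.sdiff_idem, zero_add]
      exact (Nat.sub_eq_of_eq_add hsum.symm).symm
    · by_cases hit : i ∈ t <;> simp_all
  · intro x hx
    simp only [mem_coe, mem_piAntidiag, mem_sdiff] at hx
    obtain ⟨hsum, hsupp⟩ := hx
    simp only [coe_filter, mem_piAntidiag, Set.mem_ofPred_eq]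
    refine ⟨⟨?_, fun i hi => ?_⟩, fun i hi => t.piecewise_eq_of_mem _ _ hi⟩
    · rw [sum_piecewise, inter_eq_right.2 hts, hsum, Nat.add_sub_cancel' hg]
    · by_cases hit : i ∈ t
      · exact hts hit
      · exact (hsupp i (by simpa [hit] using hi)).1
  · intro x hx
    simp only [coe_filter, Set.mem_ofPred_eq] at hx
    funext i
    by_cases hit : i ∈ t <;> simp [hit, hx]
  · intro x hx
    simp only [mem_coe, mem_piAntidiag, mem_sdiff] at hx
    funext i
    by_cases hit : i ∈ t
    · simpa [hit] using (by_contra fun hi => (hx.2 i (Ne.symm hi)).2 hit : 0 = x i)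
    · simp [hit]

lemma sum_piAntidiag_choose_card_filter_eq {k l m : ℕ} (hm : k * l ≤ m) :
    ∑ x ∈ piAntidiag s m, (#{i ∈ s | x i = l}).choose k =
      (#s).choose k * (#s - k).multichoose (m - k * l) := by
  have hchoose : ∀ x : ι → ℕ,
      (#{i ∈ s | x i = l}).choose k = #{t ∈ powersetCard k s | ∀ i ∈ t, x i = l} := fun x => by
    rw [← card_powersetCard]
    congr 1
    ext t
    simp only [mem_powersetCard, mem_filter, subset_iff]
    grind
  have hcount : ∀ t ∈ powersetCard k s, #{x ∈ piAntidiag s m | ∀ i ∈ t, x i = l} =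
      (#s - k).multichoose (m - k * l) := by
    intro t ht
    obtain ⟨hts, rfl⟩ := mem_powersetCard.1 ht
    have hsum : ∑ _i ∈ t, l = #t * l := by rw [sum_const, smul_eq_mul]
    rw [card_filter_piAntidiag_eqOn hts (g := fun _ => l) (hsum.trans_le hm), hsum,
      card_sdiff_of_subset hts]
  rw [sum_congr rfl fun x _ => hchoose x]
  refine (sum_card_bipartiteAbove_eq_sum_card_bipartiteBelow _).trans ?_
  exact (sum_const_nat hcount).trans (by rw [card_powersetCard])

lemma succ_mul_sum_choose_numBlocksOfSize {k l n : ℕ} (hl : l ≠ 0) (hn : k * l ≤ n) :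
    (n + 1) * ∑ π : NCPart n, (numBlocksOfSize l π).choose k =
      (n + 1).choose k * (n + 1 - k).multichoose (n - k * l) := by
  rw [sum_ncPart_eq_sum_lukasiewiczWords hl fun c => c.choose k, ← smul_eq_mul,
    ← sum_piAntidiag_eq_nsmul_sum_lukasiewiczWords fun r x => by rw [card_filter_cyclicShift_eq],
    sum_piAntidiag_choose_card_filter_eq hn, card_univ, Fintype.card_fin]

lemma succ_mul_multichoose_succ_right (a b : ℕ) :
    (b + 1) * a.multichoose (b + 1) = (a + b) * a.multichoose b := by
  obtain rfl | a := a
  · cases b <;> simp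
  · rw [Nat.multichoose_eq, Nat.multichoose_eq, show a + 1 + (b + 1) - 1 = a + b + 1 by omega,
      show a + 1 + b - 1 = a + b by omega, mul_comm, ← Nat.add_one_mul_choose_eq,
      add_right_comm]

lemma mul_multichoose_succ_left (a b : ℕ) :
    a * (a + 1).multichoose b = (a + b) * a.multichoose b := by
  obtain rfl | a := a
  · cases b <;> simp
  · have hchoose := Nat.choose_mul_succ_eq (a + b) b
    rw [show a + b + 1 - b = a + 1 by omega] at hchoose
    rw [Nat.multichoose_eq, Nat.multichoose_eq, show a + 1 + 1 + b - 1 = a + b + 1 by omega,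
      show a + 1 + b - 1 = a + b by omega, mul_comm, ← hchoose, mul_comm, add_right_comm]

/-- The probability that `k` given parts of a uniformly random weak composition of `n` into `n + 1`
parts take prescribed values with sum `m`. This is meaningful for `k ≤ n + 1` and `m ≤ n` only. -/
noncomputable def prescribedPartsProb (k m n : ℕ) : ℝ :=
  (n + 1 - k).multichoose (n - m) / (n + 1).multichoose n

lemma sum_choose_numBlocksOfSize_div_card {k l n : ℕ} (hl : l ≠ 0) (hn : k * l ≤ n) :
    (∑ π : NCPart n, ((numBlocksOfSize l π).choose k : ℝ)) / Fintype.card (NCPart n) =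
      (n + 1).choose k * prescribedPartsProb k (k * l) n := by
  have hmoment := succ_mul_sum_choose_numBlocksOfSize hl hn
  have hcard : (n + 1) * Fintype.card (NCPart n) = (n + 1).multichoose n := by
    simpa using succ_mul_sum_choose_numBlocksOfSize (k := 0) hl (by simp : 0 * l ≤ n)
  rw [prescribedPartsProb, ← mul_div_assoc, ← Nat.cast_mul, ← hmoment, ← hcard]
  push_cast
  rw [mul_div_mul_left _ _ n.cast_add_one_ne_zero]

-- Writing `n (n + 1) = 2 (n + 1).choose 2` as `(n + 1)² (n / (n + 1))` makes the leading terms of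
-- the second factorial moment and of the squared mean cancel.
lemma varBlocksOfSize_eq {l n : ℕ} (hl : l ≠ 0) (hn : 2 * l ≤ n) :
    varBlocksOfSize l n = (n + 1) * prescribedPartsProb 1 l n + (n + 1) ^ 2 *
      (n / (n + 1) * prescribedPartsProb 2 (2 * l) n - prescribedPartsProb 1 l n ^ 2) := by
  have hmean := sum_choose_numBlocksOfSize_div_card (k := 1) (l := l) (n := n) hl (by omega)
  have hpairs := sum_choose_numBlocksOfSize_div_card hl hn
  simp only [Nat.choose_one_right, one_mul, Nat.cast_add_one] at hmean
  have hsq : ∑ π : NCPart n, (numBlocksOfSize l π : ℝ) ^ 2 =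
      2 * ∑ π : NCPart n, ((numBlocksOfSize l π).choose 2 : ℝ) +
        ∑ π : NCPart n, (numBlocksOfSize l π : ℝ) := by
    rw [mul_sum, ← sum_add_distrib]
    refine sum_congr rfl fun π _ => ?_
    rw [Nat.cast_choose_two]
    ring
  rw [varBlocksOfSize, hsq, add_div, mul_div_assoc, hpairs, hmean, Nat.cast_choose_two]
  push_cast
  field_simp
  ring

lemma prescribedPartsProb_zero_zero (n : ℕ) : prescribedPartsProb 0 0 n = 1 := by
  refine div_self (Nat.cast_ne_zero.2 ?_)
  rw [Nat.multichoose_eq]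
  exact (Nat.choose_pos (by omega)).ne'

lemma prescribedPartsProb_succ_left {k n : ℕ} (hk : k < n) :
    prescribedPartsProb (k + 1) 0 n = (n - k) / (2 * n - k) * prescribedPartsProb k 0 n := by
  obtain ⟨a, rfl⟩ := Nat.exists_eq_add_of_lt hk
  have hrec : ((a : ℝ) + 1) * (a + 1 + 1).multichoose (k + a + 1) =
      (a + 1 + (k + a + 1)) * (a + 1).multichoose (k + a + 1) := by
    exact_mod_cast mul_multichoose_succ_left (a + 1) (k + a + 1)
  simp only [prescribedPartsProb, show k + a + 1 + 1 - (k + 1) = a + 1 by omega,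
    show k + a + 1 + 1 - k = a + 1 + 1 by omega, Nat.sub_zero]
  push_cast
  rw [show (k + a + 1 - k : ℝ) = a + 1 by ring,
    show (2 * (k + a + 1) - k : ℝ) = a + 1 + (k + a + 1) by ring, div_mul_div_comm, hrec,
    mul_div_mul_left _ _ (by positivity)]

lemma prescribedPartsProb_succ_right {k m n : ℕ} (hk : k ≤ n) (hm : m < n) :
    prescribedPartsProb k (m + 1) n =
      (n - m) / (2 * n - (k + m)) * prescribedPartsProb k m n := by
  obtain ⟨a, ha⟩ := Nat.exists_eq_add_of_le hk
  obtain ⟨b, hb⟩ := Nat.exists_eq_add_of_lt hm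
  have hrec : ((b : ℝ) + 1) * (a + 1).multichoose (b + 1) =
      (a + 1 + b) * (a + 1).multichoose b := by
    exact_mod_cast succ_mul_multichoose_succ_right (a + 1) b
  have hak : (n : ℝ) = k + a := mod_cast ha
  have hbm : (n : ℝ) = m + b + 1 := mod_cast hb
  simp only [prescribedPartsProb, show n + 1 - k = a + 1 by omega,
    show n - (m + 1) = b by omega, show n - m = b + 1 by omega]
  rw [show (n - m : ℝ) = b + 1 by linarith, show (2 * n - (k + m) : ℝ) = a + 1 + b by linarith,
    div_mul_div_comm, hrec, mul_div_mul_left _ _ (by positivity)]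

end Counting

open Asymptotics Filter

section Expansions

/-- `f n = c (1 + d / (n + 1)) + O(1 / (n + 1)²)`. Expanding in `1 / (n + 1)` instead of `1 / n`
avoids a division by zero. -/
def HasFirstOrderExpansion (f : ℕ → ℝ) (c d : ℝ) : Prop :=
  (fun n : ℕ => f n - c * (1 + d * ((n : ℝ) + 1)⁻¹)) =O[atTop] fun n : ℕ => (((n : ℝ) + 1)⁻¹) ^ 2

variable {f g : ℕ → ℝ} {c d c' d' : ℝ}

lemma isBigO_inv_add_one_one :
    (fun n : ℕ => ((n : ℝ) + 1)⁻¹) =O[atTop] fun _ => (1 : ℝ) := by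
  simpa using (tendsto_one_div_add_atTop_nhds_zero_nat (𝕜 := ℝ)).isBigO_one ℝ

lemma isBigO_one_add_mul_inv_add_one_one (d : ℝ) :
    (fun n : ℕ => 1 + d * ((n : ℝ) + 1)⁻¹) =O[atTop] fun _ => (1 : ℝ) :=
  (isBigO_refl _ _).add (isBigO_inv_add_one_one.const_mul_left d)

namespace HasFirstOrderExpansion

lemma isBigO_one (hf : HasFirstOrderExpansion f c d) : f =O[atTop] fun _ => (1 : ℝ) := by
  have herror := hf.trans (isBigO_inv_add_one_one.pow 2)
  simp only [one_pow] at herror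
  simpa using herror.add ((isBigO_one_add_mul_inv_add_one_one d).const_mul_left c)

lemma mul (hf : HasFirstOrderExpansion f c d) (hg : HasFirstOrderExpansion g c' d') :
    HasFirstOrderExpansion (fun n => f n * g n) (c * c') (d + d') := by
  have hg_error := hf.isBigO_one.mul hg
  have hf_error := ((isBigO_one_add_mul_inv_add_one_one d').const_mul_left c').mul hf
  have hcross := (isBigO_refl (fun n : ℕ => (((n : ℝ) + 1)⁻¹) ^ 2) atTop).const_mul_left
    (c * c' * (d * d'))
  simp only [one_mul] at hg_error hf_error
  refine ((hg_error.add hf_error).add hcross).congr_left fun n => ?_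
  ring

lemma congr' (hf : HasFirstOrderExpansion f c d) (hfg : f =ᶠ[atTop] g) :
    HasFirstOrderExpansion g c d :=
  IsBigO.congr' hf (hfg.sub EventuallyEq.rfl) EventuallyEq.rfl

lemma const (c : ℝ) : HasFirstOrderExpansion (fun _ => c) c 0 := by
  simpa [HasFirstOrderExpansion] using isBigO_zero _ _

lemma sub_div_mul_sub {s : ℝ} (hs : s ≠ 0) (a b : ℝ) :
    HasFirstOrderExpansion (fun n => (n - a) / (s * n - b)) (1 / s) (b / s - a) := by
  have hne : ∀ᶠ n : ℕ in atTop, s * (n : ℝ) - b ≠ 0 := by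
    filter_upwards [tendsto_natCast_atTop_atTop.eventually_ne_atTop (b / s)] with n hn hzero
    exact hn (by field_simp; linarith)
  have hratio : (fun n : ℕ => ((n : ℝ) + 1) / (s * n - b)) =O[atTop] fun _ => (1 : ℝ) := by
    have := (tendsto_add_mul_div_add_mul_atTop_nhds (1 : ℝ) (-b) 1 hs).isBigO_one ℝ
    refine this.congr_left fun n => ?_
    congr 1 <;> ring
  have herror := (hratio.const_mul_left ((s + b) * (b / s - a) / s)).mul
    (isBigO_refl (fun n : ℕ => (((n : ℝ) + 1)⁻¹) ^ 2) atTop)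
  simp only [one_mul] at herror
  refine herror.congr' ?_ EventuallyEq.rfl
  filter_upwards [hne] with n hn
  have : (n : ℝ) + 1 ≠ 0 := n.cast_add_one_ne_zero
  field_simp
  ring

lemma add_one_mul_sub_isBigO_one (hf : HasFirstOrderExpansion f c d) :
    (fun n : ℕ => (n + 1) * f n - c * (n + 1)) =O[atTop] fun _ => (1 : ℝ) := by
  have herror := (isBigO_refl (fun n : ℕ => (n : ℝ) + 1) atTop).mul hf
  have hinv : (fun n : ℕ => ((n : ℝ) + 1) * (((n : ℝ) + 1)⁻¹) ^ 2) =O[atTop] fun _ => (1 : ℝ) := by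
    refine isBigO_inv_add_one_one.congr_left fun n => ?_
    field_simp
  have hconst : (fun _ : ℕ => c * d) =O[atTop] fun _ => (1 : ℝ) :=
    isBigO_const_const _ one_ne_zero _
  refine ((herror.trans hinv).add hconst).congr_left fun n => ?_
  field_simp
  ring

lemma add_one_sq_mul_sub_isBigO_one (hf : HasFirstOrderExpansion f c d)
    (hg : HasFirstOrderExpansion g c d') :
    (fun n : ℕ => (n + 1) ^ 2 * (f n - g n) - c * (d - d') * (n + 1)) =O[atTop]
      fun _ => (1 : ℝ) := by
  have h := (isBigO_refl (fun n : ℕ => ((n : ℝ) + 1) ^ 2) atTop).mul (IsBigO.sub hf hg)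
  refine h.congr' (.of_forall fun n => ?_) (.of_forall fun n => ?_)
  all_goals
    have : (n : ℝ) + 1 ≠ 0 := n.cast_add_one_ne_zero
    field_simp
  ring

end HasFirstOrderExpansion

lemma hasFirstOrderExpansion_prescribedPartsProb (k m : ℕ) :
    HasFirstOrderExpansion (prescribedPartsProb k m) ((1 / 2) ^ (k + m))
      ((k + m - (k - m) ^ 2) / 4) := by
  induction m with
  | zero =>
    induction k with
    | zero =>
      convert HasFirstOrderExpansion.const 1 using 1
      · exact funext prescribedPartsProb_zero_zero
      · simp
      · simp
    | succ k ih =>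
      have h := (HasFirstOrderExpansion.sub_div_mul_sub two_ne_zero k k).mul ih
      convert h.congr' ?_ using 1
      · ring
      · push_cast
        ring
      · filter_upwards [eventually_gt_atTop k] with n hn
        exact (prescribedPartsProb_succ_left hn).symm
  | succ m ih =>
    have h := (HasFirstOrderExpansion.sub_div_mul_sub two_ne_zero m (k + m)).mul ih
    convert h.congr' ?_ using 1
    · ring
    · push_cast
      ring
    · filter_upwards [eventually_ge_atTop k, eventually_gt_atTop m] with n hk hm
      exact (prescribedPartsProb_succ_right hk hm).symm

lemma hasFirstOrderExpansion_div_mul_prescribedPartsProb_two (l : ℕ) :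
    HasFirstOrderExpansion (fun n => n / (n + 1) * prescribedPartsProb 2 (2 * l) n)
      ((1 / 2) ^ (1 + l) * (1 / 2) ^ (1 + l)) ((2 + 2 * l - (2 - 2 * l) ^ 2) / 4 - 1) := by
  convert (HasFirstOrderExpansion.sub_div_mul_sub one_ne_zero 0 (-1)).mul
    (hasFirstOrderExpansion_prescribedPartsProb 2 (2 * l)) using 1
  · simp
  · ring
  · push_cast
    ring

end Expansions

/-- For fixed `l ≥ 1`,
`Var(X_n^{(l)}) = (n/2^{2l+3})·(2^{l+2} − (l − 1)² − 2) + O(1)`: there is a constant `K`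
(possibly depending on `l`) such that the difference is at most `K` for all `n ≥ 1`. -/
theorem varBlocksOfSize_asymptotic (l : ℕ) (hl : 1 ≤ l) :
    ∃ K : ℝ, ∀ n : ℕ, 1 ≤ n →
      |varBlocksOfSize l n -
        ((n : ℝ) / 2 ^ (2 * l + 3)) * (2 ^ (l + 2) - ((l : ℝ) - 1) ^ 2 - 2)| ≤ K := by
  suffices hO : (fun n : ℕ => varBlocksOfSize l n -
      ((n : ℝ) / 2 ^ (2 * l + 3)) * (2 ^ (l + 2) - ((l : ℝ) - 1) ^ 2 - 2)) =O[atTop]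
      fun _ => (1 : ℝ) by
    obtain ⟨K, hK⟩ := isBigO_one_nat_atTop_iff.1 hO
    exact ⟨K, fun n _ => hK n⟩
  have hmean := hasFirstOrderExpansion_prescribedPartsProb 1 l
  have hdiff := (hasFirstOrderExpansion_div_mul_prescribedPartsProb_two
    l).add_one_sq_mul_sub_isBigO_one (hmean.mul hmean)
  have hconst : (fun _ : ℕ => ((2 : ℝ) ^ (l + 2) - ((l : ℝ) - 1) ^ 2 - 2) / 2 ^ (2 * l + 3))
      =O[atTop] fun _ => (1 : ℝ) := isBigO_const_const _ one_ne_zero _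
  refine ((hmean.add_one_mul_sub_isBigO_one.add hdiff).add hconst).congr' ?_ .rfl
  filter_upwards [eventually_ge_atTop (2 * l)] with n hn
  rw [varBlocksOfSize_eq (Nat.one_le_iff_ne_zero.1 hl) hn]
  simp only [Nat.cast_one, one_div, inv_pow, pow_add, pow_mul', pow_one]
  field_simp
  ring
end

section
/- Fix integers k, l ≥ 1 with k ≠ l. Let Cov(X_n^{(k)}, X_n^{(l)}) = (1/C_n)·Σ_{π ∈ NC(n)} k_k(π)·k_l(π) − ((1/C_n)·Σ_{π} k_k(π))·((1/C_n)·Σ_{π} k_l(π)) be the covariance of the numbers of blocks of sizes k and l in a uniformly random non-crossing partition of [n]. Then Cov(X_n^{(k)}, X_n^{(l)}) = −(n/2^{k+l+3})·(2 + (k − 1)(l − 1)) + O(1); that is, there exists a constant K (possibly depending on k and l) such that |Cov(X_n^{(k)}, X_n^{(l)}) + (n/2^{k+l+3})·(2 + (k − 1)(l − 1))| ≤ K for all n ≥ 1. In particular, the numbers of blocks of different sizes are negatively correlated for all large n. -/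
open Filter

/-- The covariance of the numbers of blocks of sizes `k` and `l` of a uniformly random
non-crossing partition of `[n]`. -/
noncomputable def covBlocksOfSize (k l n : ℕ) : ℝ :=
  (∑ π : NCPart n, (numBlocksOfSize k π : ℝ) * (numBlocksOfSize l π : ℝ)) /
      (Fintype.card (NCPart n) : ℝ) -
    ((∑ π : NCPart n, (numBlocksOfSize k π : ℝ)) / (Fintype.card (NCPart n) : ℝ)) *
      ((∑ π : NCPart n, (numBlocksOfSize l π : ℝ)) / (Fintype.card (NCPart n) : ℝ))


/-!
Say that a block is opened at its least element, and count weighted non-crossing partitions all of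
whose blocks are opened among the first `p` elements, `h` being the number of the other elements. A
block opened at the last of these `p` elements must be an interval, as otherwise a block opened
earlier would cross it. Deleting it (or just closing this element to openings, when no block opens
there) lowers `p` by one. So, with `G = ∑ t_j X ^ j`, each generating series in `h` arises from the
previous one by multiplying by `G`, dropping the constant term and dividing by `X`. Since
`[X ^ (N + 1)] G ^ N * (G - X * G') = 0`, pairing these series with `G ^ N * (G - X * G')` solves
the recursion: `(n + 1) * ∑ π, ∏ t_{|B|} = [X ^ n] G ^ (n + 1)`.

Perturbing `t_k` and `t_l` to first order, with dual numbers, turns this identity into formulas for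
the first and mixed second moments. At `t = 1` they are ratios of binomial coefficients, that is,
`n` or `n ^ 2` times a function of `1 / n` analytic at `0`. In the covariance the leading terms
cancel, and the derivatives at `0` give the coefficient of `n`.
-/

open Finset PowerSeries

section BlockWeight
variable {α : Type*} [DecidableEq α] {s C : Finset α}

theorem parts_avoid_of_mem (P : Finpartition s) (hC : C ∈ P.parts) :
    (P.avoid C).parts = P.parts.erase C := by
  ext B
  rw [Finpartition.mem_avoid, mem_erase]
  have hdisj : ∀ D ∈ P.parts, D ≠ C → D \ C = D := fun D hD hDC =>
    sdiff_eq_self_of_disjoint (P.disjoint hD hC hDC)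
  constructor
  · rintro ⟨D, hD, hDC, rfl⟩
    have hne : D ≠ C := fun h => hDC h.le
    rw [hdisj D hD hne]
    exact ⟨hne, hD⟩
  · rintro ⟨hBC, hB⟩
    refine ⟨B, hB, fun hle => ?_, hdisj B hB hBC⟩
    exact P.ne_empty hB ((P.disjoint hB hC hBC).eq_bot_of_le hle)

variable {R : Type*} [CommSemiring R] (t : ℕ → R)

/-- The multiplicative weight `∏ t_{|B|}` over the blocks `B` of a partition. -/
def blockWeight (P : Finpartition s) : R := ∏ B ∈ P.parts, t #B

theorem blockWeight_of_mem {P : Finpartition s} (hC : C ∈ P.parts) :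
    blockWeight t P = t #C * blockWeight t (P.avoid C) := by
  rw [blockWeight, blockWeight, parts_avoid_of_mem P hC, mul_prod_erase _ (fun B => t #B) hC]

end BlockWeight

section Noncrossing
variable {α : Type*} [LinearOrder α] {s L C : Finset α} {p : α}

/-- `L` consists of the `#L` smallest elements of `s`. -/
def IsInitialSegment (L s : Finset α) : Prop :=
  L ⊆ s ∧ ∀ x ∈ L, ∀ y ∈ s, y ∉ L → x < y

theorem isInitialSegment_empty (s : Finset α) : IsInitialSegment ∅ s := by
  simp [IsInitialSegment]

theorem isInitialSegment_refl (s : Finset α) : IsInitialSegment s s :=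
  ⟨Subset.rfl, fun _ _ _ hy hy' => absurd hy hy'⟩

namespace IsInitialSegment

theorem subset_or_subset (hC : IsInitialSegment C s) (hL : IsInitialSegment L s) :
    C ⊆ L ∨ L ⊆ C := by
  by_contra! h
  obtain ⟨⟨x, hxC, hxL⟩, ⟨y, hyL, hyC⟩⟩ := And.imp not_subset.1 not_subset.1 h
  exact lt_asymm (hC.2 x hxC y (hL.1 hyL) hyC) (hL.2 y hyL x (hC.1 hxC) hxL)

theorem eq_of_card_eq (hC : IsInitialSegment C s) (hL : IsInitialSegment L s) (h : #C = #L) :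
    C = L := by
  rcases hC.subset_or_subset hL with hCL | hLC
  · exact eq_of_subset_of_card_le hCL h.ge
  · exact (eq_of_subset_of_card_le hLC h.le).symm

theorem exists_card_eq {i : ℕ} (hi : i ≤ #s) : ∃ C, IsInitialSegment C s ∧ #C = i := by
  induction s using Finset.induction_on_max with
  | empty => exact ⟨∅, isInitialSegment_empty ∅, by simp_all⟩
  | insert m s hm ih =>
    rcases hi.eq_or_lt with rfl | hlt
    · exact ⟨_, isInitialSegment_refl _, rfl⟩
    · rw [card_insert_of_notMem fun h => lt_irrefl m (hm m h)] at hlt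
      obtain ⟨C, hC, rfl⟩ := ih (Nat.lt_succ_iff.1 hlt)
      refine ⟨C, ⟨hC.1.trans (subset_insert m s), fun x hx y hy hyC => ?_⟩, rfl⟩
      rcases mem_insert.1 hy with rfl | hy
      · exact hm x (hC.1 hx)
      · exact hC.2 x hx y hy hyC

theorem mem_of_lt_of_lt (hC : IsInitialSegment C (s \ L)) (hL : IsInitialSegment L s)
    {x y z : α} (hx : x ∈ C) (hz : z ∈ C) (hy : y ∈ s) (hxy : x < y) (hyz : y < z) : y ∈ C := by
  by_contra hyC
  obtain ⟨hxs, hxL⟩ := mem_sdiff.1 (hC.1 hx)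
  have hyL : y ∉ L := fun hyL => lt_asymm hxy (hL.2 y hyL x hxs hxL)
  exact lt_asymm hyz (hC.2 z hz y (mem_sdiff.2 ⟨hy, hyL⟩) hyC)

theorem sdiff (hL : IsInitialSegment L s) (hC : C ⊆ s \ L) : IsInitialSegment L (s \ C) :=
  ⟨fun _ hx => mem_sdiff.2 ⟨hL.1 hx, fun hxC => (mem_sdiff.1 (hC hxC)).2 hx⟩,
    fun x hx y hy => hL.2 x hx y (mem_sdiff.1 hy).1⟩

theorem of_insert (hpL : IsInitialSegment (insert p L) s) (hp : ∀ x ∈ L, x < p) :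
    IsInitialSegment L s := by
  refine ⟨(subset_insert p L).trans hpL.1, fun x hx y hy hyL => ?_⟩
  rcases eq_or_ne y p with rfl | hyp
  · exact hp x hx
  · exact hpL.2 x (mem_insert_of_mem hx) y hy (by simp [hyp, hyL])

theorem le_of_mem_sdiff (hpL : IsInitialSegment (insert p L) s) {y : α} (hy : y ∈ s \ L) :
    p ≤ y := by
  obtain ⟨hys, hyL⟩ := mem_sdiff.1 hy
  rcases eq_or_ne y p with rfl | hyp
  · exact le_rfl
  · exact (hpL.2 p (mem_insert_self p L) y hys (by simp [hyp, hyL])).le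

theorem mem_of_insert (hC : IsInitialSegment C (s \ L)) (hpL : IsInitialSegment (insert p L) s)
    (hp : p ∉ L) (hne : C.Nonempty) : p ∈ C := by
  by_contra hpC
  obtain ⟨x, hx⟩ := hne
  have hps : p ∈ s \ L := mem_sdiff.2 ⟨hpL.1 (mem_insert_self p L), hp⟩
  exact (hpL.le_of_mem_sdiff (hC.1 hx)).not_gt (hC.2 x hx p hps hpC)

end IsInitialSegment

open Classical in
/-- The set of initial segments of `s`, the empty one and `s` itself included. -/
noncomputable def initialSegments (s : Finset α) : Finset (Finset α) :=
  {C ∈ s.powerset | IsInitialSegment C s}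

theorem mem_initialSegments : C ∈ initialSegments s ↔ IsInitialSegment C s := by
  simpa [initialSegments] using fun h : IsInitialSegment C s => h.1

theorem sum_initialSegments {M : Type*} [AddCommMonoid M] (s : Finset α) (f : ℕ → ℕ → M) :
    ∑ C ∈ initialSegments s, f #C #(s \ C) = ∑ ij ∈ antidiagonal #s, f ij.1 ij.2 := by
  refine sum_nbij (fun C => (#C, #(s \ C))) (fun C hC => ?_) (fun C hC D hD h => ?_)
    (fun ij hij => ?_) fun _ _ => rfl
  · rw [HasAntidiagonal.mem_antidiagonal, add_comm,
      card_sdiff_add_card_eq_card (mem_initialSegments.1 hC).1]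
  · exact (mem_initialSegments.1 hC).eq_of_card_eq (mem_initialSegments.1 hD)
      (congrArg Prod.fst h)
  · have hij : ij.1 + ij.2 = #s := by simpa using hij
    obtain ⟨C, hC, hCi⟩ := IsInitialSegment.exists_card_eq (s := s) (i := ij.1) (by omega)
    refine ⟨C, mem_initialSegments.2 hC, Prod.ext hCi ?_⟩
    have := card_sdiff_add_card_eq_card hC.1
    dsimp only
    omega

/-- The notion of `IsNonCrossing` for partitions of a finite subset `s` of a linear order; needed
because deleting a block of a partition of `[n]` leaves a partition of a subset. -/
def IsNonCrossingOn (P : Finpartition s) : Prop :=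
  ∀ a b c d : α, a < b → b < c → c < d → ∀ B ∈ P.parts, ∀ B' ∈ P.parts,
    a ∈ B → c ∈ B → b ∈ B' → d ∈ B' → B = B'

theorem IsNonCrossingOn.avoid {P : Finpartition s} (hP : IsNonCrossingOn P) (hC : C ∈ P.parts) :
    IsNonCrossingOn (P.avoid C) := by
  intro a b c d hab hbc hcd B hB B' hB'
  rw [parts_avoid_of_mem P hC] at hB hB'
  exact hP a b c d hab hbc hcd B (mem_of_mem_erase hB) B' (mem_of_mem_erase hB')

theorem IsNonCrossingOn.extend {Q : Finpartition (s \ C)} (hQ : IsNonCrossingOn Q)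
    (hL : IsInitialSegment L s) (hC : IsInitialSegment C (s \ L)) (hne : C ≠ ⊥)
    (hdisj : Disjoint (s \ C) C) (hs : s \ C ⊔ C = s) :
    IsNonCrossingOn (Q.extend hne hdisj hs) := by
  have hnotMem : ∀ B ∈ Q.parts, ∀ y ∈ B, y ∈ s ∧ y ∉ C := fun B hB y hy =>
    mem_sdiff.1 (Q.subset hB hy)
  intro a b c d hab hbc hcd B hB B' hB' ha hc hb hd
  rw [Finpartition.extend_parts, mem_insert] at hB hB'
  rcases hB with rfl | hB <;> rcases hB' with rfl | hB'
  · rfl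
  · obtain ⟨hbs, hbC⟩ := hnotMem B' hB' b hb
    exact absurd (hC.mem_of_lt_of_lt hL ha hc hbs hab hbc) hbC
  · obtain ⟨hcs, hcC⟩ := hnotMem B hB c hc
    exact absurd (hC.mem_of_lt_of_lt hL hb hd hcs hbc hcd) hcC
  · exact hQ a b c d hab hbc hcd B hB B' hB' ha hc hb hd

theorem IsNonCrossingOn.isInitialSegment_of_disjoint {P : Finpartition s}
    (hP : IsNonCrossingOn P) (hpL : IsInitialSegment (insert p L) s) (hp : ∀ x ∈ L, x < p)
    (hmeet : ∀ B ∈ P.parts, ¬ Disjoint B (insert p L)) (hC : C ∈ P.parts) (hCL : Disjoint C L) :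
    IsInitialSegment C (s \ L) := by
  have hpC : p ∈ C := by simpa [hCL] using hmeet C hC
  refine ⟨subset_sdiff.2 ⟨P.subset hC, hCL⟩, fun x hx y hy hyC => ?_⟩
  by_contra! hyx
  obtain ⟨B, hB, hyB⟩ := P.exists_mem (mem_sdiff.1 hy).1
  have hBC : B ≠ C := fun h => hyC (h ▸ hyB)
  have hpB : p ∉ B := fun h => hBC (P.eq_of_mem_parts hB hC h hpC)
  obtain ⟨w, hwB, hwL⟩ : ∃ w ∈ B, w ∈ L := by
    simpa [hpB, not_disjoint_iff] using hmeet B hB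
  have hpy : p < y := (hpL.le_of_mem_sdiff hy).lt_of_ne fun h => hyC (h ▸ hpC)
  have hyx : y < x := hyx.lt_of_ne fun h => hyC (h ▸ hx)
  exact hBC (hP w p y x (hp w hwL) hpy hyx B hB C hC hwB hyB hpC hx)

open Classical in
/-- The non-crossing partitions of `s` all of whose blocks meet `L`. For an initial segment `L`
this says that all blocks start in `L`, and growing `L` one element at a time reaches all
non-crossing partitions of `s`. -/
noncomputable def nonCrossingMeeting (s L : Finset α) : Finset (Finpartition s) :=
  {P | IsNonCrossingOn P ∧ ∀ B ∈ P.parts, ¬ Disjoint B L}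

theorem mem_nonCrossingMeeting {P : Finpartition s} :
    P ∈ nonCrossingMeeting s L ↔ IsNonCrossingOn P ∧ ∀ B ∈ P.parts, ¬ Disjoint B L := by
  simp [nonCrossingMeeting]

theorem nonCrossingMeeting_mono {L' : Finset α} (h : L ⊆ L') :
    nonCrossingMeeting s L ⊆ nonCrossingMeeting s L' := by
  intro P
  simp only [mem_nonCrossingMeeting]
  exact And.imp_right fun hP B hB hBL' => hP B hB (hBL'.mono_right h)

theorem avoid_mem_nonCrossingMeeting {P : Finpartition s}
    (hP : P ∈ nonCrossingMeeting s (insert p L)) (hC : C ∈ P.parts) (hpC : p ∈ C) :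
    P.avoid C ∈ nonCrossingMeeting (s \ C) L := by
  rw [mem_nonCrossingMeeting] at hP ⊢
  refine ⟨hP.1.avoid hC, fun B hB => ?_⟩
  obtain ⟨hBC, hB⟩ := mem_erase.1 (parts_avoid_of_mem P hC ▸ hB)
  have hpB : p ∉ B := fun h => hBC (P.eq_of_mem_parts hB hC h hpC)
  simpa [hpB] using hP.2 B hB

theorem extend_mem_nonCrossingMeeting {Q : Finpartition (s \ C)}
    (hQ : Q ∈ nonCrossingMeeting (s \ C) L) (hL : IsInitialSegment L s)
    (hC : IsInitialSegment C (s \ L)) (hpC : p ∈ C) (hne : C ≠ ⊥)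
    (hdisj : Disjoint (s \ C) C) (hs : s \ C ⊔ C = s) :
    Q.extend hne hdisj hs ∈ nonCrossingMeeting s (insert p L) := by
  rw [mem_nonCrossingMeeting] at hQ ⊢
  refine ⟨hQ.1.extend hL hC hne hdisj hs, fun B hB => ?_⟩
  rw [Finpartition.extend_parts, mem_insert] at hB
  rcases hB with rfl | hB
  · exact not_disjoint_iff.2 ⟨p, hpC, mem_insert_self p L⟩
  · exact fun h => hQ.2 B hB (h.mono_right (subset_insert p L))

variable {R : Type*} [CommSemiring R] (t : ℕ → R)

theorem sum_nonCrossingMeeting_of_mem (hL : IsInitialSegment L s)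
    (hC : IsInitialSegment C (s \ L)) (hpC : p ∈ C) :
    ∑ P ∈ nonCrossingMeeting s (insert p L) with C ∈ P.parts, blockWeight t P =
      t #C * ∑ Q ∈ nonCrossingMeeting (s \ C) L, blockWeight t Q := by
  have hne : C ≠ ⊥ := ne_empty_of_mem hpC
  have hdisj : Disjoint (s \ C) C := sdiff_disjoint
  have hs : s \ C ⊔ C = s := sdiff_union_of_subset (hC.1.trans sdiff_subset)
  have hnotMem : ∀ Q : Finpartition (s \ C), C ∉ Q.parts := fun Q hCQ =>
    (mem_sdiff.1 (Q.subset hCQ hpC)).2 hpC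
  rw [mul_sum]
  refine sum_bij' (fun P _ => P.avoid C) (fun Q _ => Q.extend hne hdisj hs)
    (fun P hP => ?_) (fun Q hQ => ?_) (fun P hP => ?_) (fun Q _ => ?_) fun P hP => ?_
  · obtain ⟨hP, hCP⟩ := mem_filter.1 hP
    exact avoid_mem_nonCrossingMeeting hP hCP hpC
  · refine mem_filter.2 ⟨extend_mem_nonCrossingMeeting hQ hL hC hpC hne hdisj hs, ?_⟩
    simp
  · ext1
    rw [Finpartition.extend_parts, parts_avoid_of_mem P (mem_filter.1 hP).2,
      insert_erase (mem_filter.1 hP).2]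
  · ext1
    rw [parts_avoid_of_mem _ (by simp), Finpartition.extend_parts, erase_insert (hnotMem Q)]
  · exact blockWeight_of_mem t (mem_filter.1 hP).2

theorem isInitialSegment_part {P : Finpartition s} (hpL : IsInitialSegment (insert p L) s)
    (hp : ∀ x ∈ L, x < p)
    (hP : P ∈ nonCrossingMeeting s (insert p L) \ nonCrossingMeeting s L) :
    IsInitialSegment (P.part p) (s \ L) := by
  rw [Finset.mem_sdiff, mem_nonCrossingMeeting, mem_nonCrossingMeeting] at hP
  obtain ⟨⟨hP, hmeet⟩, hPL⟩ := hP
  push Not at hPL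
  obtain ⟨C, hC, hCL⟩ := hPL hP
  rw [P.part_eq_of_mem hC (by simpa [hCL] using hmeet C hC)]
  exact hP.isInitialSegment_of_disjoint hpL hp hmeet hC hCL

theorem filter_part_eq (hps : p ∈ s) (hpC : p ∈ C) (hCL : Disjoint C L) :
    {P ∈ nonCrossingMeeting s (insert p L) \ nonCrossingMeeting s L | P.part p = C} =
      {P ∈ nonCrossingMeeting s (insert p L) | C ∈ P.parts} := by
  ext P
  rw [mem_filter, Finset.mem_sdiff, mem_filter, and_assoc, and_congr_right_iff]
  refine fun _ => ⟨fun h => h.2 ▸ P.part_mem.2 hps, fun hC => ⟨fun hPL => ?_, ?_⟩⟩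
  · exact (mem_nonCrossingMeeting.1 hPL).2 C hC hCL
  · exact P.part_eq_of_mem hC hpC

-- The summand `C = ∅` accounts for the partitions in which no block starts at `p`, any other `C`
-- for those in which `C` is the block starting at `p`.
theorem sum_nonCrossingMeeting_insert (ht : t 0 = 1) (hpL : IsInitialSegment (insert p L) s)
    (hp : ∀ x ∈ L, x < p) :
    ∑ P ∈ nonCrossingMeeting s (insert p L), blockWeight t P =
      ∑ C ∈ initialSegments (s \ L),
        t #C * ∑ Q ∈ nonCrossingMeeting (s \ C) L, blockWeight t Q := by
  have hL := hpL.of_insert hp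
  have hps : p ∈ s := hpL.1 (mem_insert_self p L)
  have hmaps : ∀ P ∈ nonCrossingMeeting s (insert p L) \ nonCrossingMeeting s L,
      P.part p ∈ (initialSegments (s \ L)).erase ∅ := fun P hP =>
    mem_erase.2 ⟨(P.part_nonempty.2 hps).ne_empty,
      mem_initialSegments.2 (isInitialSegment_part hpL hp hP)⟩
  rw [← sum_sdiff (nonCrossingMeeting_mono (subset_insert p L)),
    ← sum_erase_add _ _ (mem_initialSegments.2 (isInitialSegment_empty (s \ L)))]
  congr 1
  · rw [← sum_fiberwise_of_maps_to hmaps]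
    refine sum_congr rfl fun C hC => ?_
    obtain ⟨hne, hC⟩ := mem_erase.1 hC
    rw [mem_initialSegments] at hC
    have hpC : p ∈ C := hC.mem_of_insert hpL (fun h => lt_irrefl p (hp p h))
      (nonempty_iff_ne_empty.2 hne)
    rw [filter_part_eq hps hpC (subset_sdiff.1 hC.1).2]
    exact sum_nonCrossingMeeting_of_mem t hL hC hpC
  · rw [card_empty, ht, one_mul, sdiff_empty]

/-- The generating series, by the number of remaining elements, of non-crossing partitions whose
blocks all start among the first `p` elements and are weighted by `t`. It is defined by the
recursion in `p` that comes from deleting the block starting last. -/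
noncomputable def meetingSeries : ℕ → R⟦X⟧
  | 0 => 1
  | p + 1 => PowerSeries.mk fun h => coeff (h + 1) (PowerSeries.mk t * meetingSeries p)

theorem mk_mul_meetingSeries (p : ℕ) :
    PowerSeries.mk t * meetingSeries t p =
      X * meetingSeries t (p + 1) +
        PowerSeries.C (coeff 0 (PowerSeries.mk t * meetingSeries t p)) := by
  ext d
  cases d with
  | zero => simp
  | succ h => simp [meetingSeries, coeff_succ_X_mul]

theorem nonCrossingMeeting_empty_of_nonempty (hs : s.Nonempty) : nonCrossingMeeting s ∅ = ∅ := by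
  refine eq_empty_of_forall_notMem fun P hP => ?_
  obtain ⟨B, hB⟩ := P.parts_nonempty hs.ne_empty
  exact (mem_nonCrossingMeeting.1 hP).2 B hB (disjoint_empty_right B)

theorem sum_nonCrossingMeeting_eq_coeff (ht : t 0 = 1) (hL : IsInitialSegment L s) :
    ∑ P ∈ nonCrossingMeeting s L, blockWeight t P = coeff #(s \ L) (meetingSeries t #L) := by
  induction L using Finset.induction_on_max generalizing s with
  | empty =>
    rcases s.eq_empty_or_nonempty with rfl | hs
    · have hparts (P : Finpartition (∅ : Finset α)) : P.parts = ∅ :=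
        Finpartition.parts_eq_empty_iff.2 rfl
      have : Unique (Finpartition (∅ : Finset α)) := inferInstanceAs (Unique (Finpartition ⊥))
      simp [nonCrossingMeeting, IsNonCrossingOn, blockWeight, meetingSeries, hparts]
    · simp [nonCrossingMeeting_empty_of_nonempty hs, meetingSeries, coeff_one, hs.ne_empty]
  | insert p L hp ih =>
    have hpL : p ∉ L := fun h => lt_irrefl p (hp p h)
    have hcard : #(s \ insert p L) + 1 = #(s \ L) := by
      rw [sdiff_insert, card_erase_add_one (by simp [hpL, hL.1 (mem_insert_self p L)])]
    calc ∑ P ∈ nonCrossingMeeting s (insert p L), blockWeight t P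
      _ = ∑ C ∈ initialSegments (s \ L),
            t #C * coeff #((s \ L) \ C) (meetingSeries t #L) := by
        rw [sum_nonCrossingMeeting_insert t ht hL hp]
        refine sum_congr rfl fun C hC => ?_
        rw [ih ((hL.of_insert hp).sdiff (mem_initialSegments.1 hC).1), sdiff_right_comm]
      _ = coeff #(s \ L) (PowerSeries.mk t * meetingSeries t #L) := by
        simp_rw [coeff_mul, coeff_mk]
        exact sum_initialSegments (s \ L) fun i j => t i * coeff j (meetingSeries t #L)
      _ = coeff #(s \ insert p L) (meetingSeries t #(insert p L)) := by
        rw [card_insert_of_notMem hpL, meetingSeries, coeff_mk, hcard]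

theorem sum_blockWeight_eq_coeff_meetingSeries (ht : t 0 = 1) (n : ℕ) :
    ∑ π : NCPart n, blockWeight t π.1 = coeff 0 (meetingSeries t n) := by
  have h := sum_nonCrossingMeeting_eq_coeff t ht (isInitialSegment_refl (univ : Finset (Fin n)))
  rw [Finset.sdiff_self, card_empty, card_fin] at h
  rw [← h]
  refine sum_nbij (·.1) (fun π _ => ?_) Subtype.val_injective.injOn (fun P hP => ?_) fun _ _ => rfl
  · refine mem_nonCrossingMeeting.2 ⟨π.2, fun B hB => ?_⟩
    obtain ⟨x, hx⟩ := π.1.nonempty_of_mem_parts hB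
    exact not_disjoint_iff.2 ⟨x, hx, mem_univ x⟩
  · exact ⟨⟨P, (mem_nonCrossingMeeting.1 hP).1⟩, mem_univ _, rfl⟩

end Noncrossing


section Lagrange
variable {R : Type*} [CommRing R]

theorem coeff_pow_mul_sub_X_mul_derivative (G : R⟦X⟧) (N n : ℕ) :
    ((N : R) + 1) * coeff n (G ^ N * (G - X * d⁄dX R G)) =
      ((N : R) + 1 - n) * coeff n (G ^ (N + 1)) := by
  have h : C ((N : R) + 1) * (G ^ N * (G - X * d⁄dX R G)) =
      C ((N : R) + 1) * G ^ (N + 1) - X * d⁄dX R (G ^ (N + 1)) := by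
    rw [derivative_pow]
    simp only [map_add, map_natCast, map_one]
    push_cast
    ring
  rw [← coeff_C_mul, h, map_sub, coeff_C_mul]
  cases n with
  | zero => simp
  | succ n =>
    rw [coeff_succ_X_mul, coeff_derivative]
    push_cast
    ring

variable [IsAddTorsionFree R] {t : ℕ → R}

theorem coeff_pow_mul_sub_X_mul_derivative_eq_zero (G : R⟦X⟧) (N : ℕ) :
    coeff (N + 1) (G ^ N * (G - X * d⁄dX R G)) = 0 := by
  refine nsmul_right_injective N.succ_ne_zero ?_
  have h := coeff_pow_mul_sub_X_mul_derivative G N (N + 1)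
  simpa using h

-- Multiplication by `G` shifts `meetingSeries t p` up to a constant, which is orthogonal to
-- `G ^ N * (G - X * G')`.
theorem coeff_meetingSeries_mul (p N : ℕ) :
    coeff (N + p) (PowerSeries.mk t ^ (N + p) *
        (PowerSeries.mk t - X * d⁄dX R (PowerSeries.mk t))) =
      coeff N (meetingSeries t p *
        (PowerSeries.mk t ^ N * (PowerSeries.mk t - X * d⁄dX R (PowerSeries.mk t)))) := by
  induction p generalizing N with
  | zero => simp [meetingSeries]
  | succ p ih =>
    set G : R⟦X⟧ := PowerSeries.mk t
    calc coeff (N + (p + 1)) (G ^ (N + (p + 1)) * (G - X * d⁄dX R G))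
      _ = coeff (N + 1) (G * meetingSeries t p * (G ^ N * (G - X * d⁄dX R G))) := by
        rw [show N + (p + 1) = N + 1 + p by ring, ih (N + 1)]
        ring_nf
      _ = coeff N (meetingSeries t (p + 1) * (G ^ N * (G - X * d⁄dX R G))) := by
        rw [mk_mul_meetingSeries, add_mul, map_add, coeff_C_mul,
          coeff_pow_mul_sub_X_mul_derivative_eq_zero, mul_zero, add_zero, mul_assoc,
          coeff_succ_X_mul]

theorem succ_mul_sum_blockWeight (ht : t 0 = 1) (n : ℕ) :
    ((n : R) + 1) * ∑ π : NCPart n, blockWeight t π.1 = coeff n (PowerSeries.mk t ^ (n + 1)) := by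
  have h := coeff_meetingSeries_mul (t := t) n 0
  rw [zero_add, pow_zero, one_mul] at h
  have h0 : coeff 0 (meetingSeries t n * (PowerSeries.mk t - X * d⁄dX R (PowerSeries.mk t))) =
      coeff 0 (meetingSeries t n) := by
    simp [ht]
  rw [sum_blockWeight_eq_coeff_meetingSeries t ht, ← h0, ← h, coeff_pow_mul_sub_X_mul_derivative]
  ring

end Lagrange


section Moments
variable {R : Type*} [CommRing R] {t : ℕ → R} {k l : ℕ}

open scoped DualNumber
open TrivSqZeroExt

instance {A M : Type*} [AddMonoid A] [AddMonoid M] [IsAddTorsionFree A] [IsAddTorsionFree M] :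
    IsAddTorsionFree (TrivSqZeroExt A M) :=
  inferInstanceAs (IsAddTorsionFree (A × M))

/-- The weights `t` with `t k` replaced by `(1 + ε) * t k`, so that the `ε`-parts of weighted
counts are first moments of the number of blocks of size `k`. -/
def markedWeights (k : ℕ) (t : ℕ → R) (j : ℕ) : R[ε] :=
  inl (t j) * if j = k then 1 + ε else 1

theorem markedWeights_of_ne {j : ℕ} (h : j ≠ k) : markedWeights k t j = inl (t j) := by
  simp [markedWeights, h]

theorem blockWeight_markedWeights {n : ℕ} (π : NCPart n) :
    blockWeight (markedWeights k t) π.1 =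
      inl (blockWeight t π.1) + inr (numBlocksOfSize k π * blockWeight t π.1) := by
  have hpow (m : ℕ) : (1 + ε : R[ε]) ^ m = 1 + inr (m : R) := by
    ext <;> simp [fst_pow, snd_pow]
  have hprod : ∏ B ∈ π.1.parts, (inl (t #B) : R[ε]) = inl (∏ B ∈ π.1.parts, t #B) :=
    (map_prod (inlHom R R) _ _).symm
  simp_rw [blockWeight, markedWeights, prod_mul_distrib, prod_ite, prod_const, one_pow, mul_one]
  rw [hprod, hpow, numBlocksOfSize]
  ext <;> simp [mul_comm]

theorem mk_markedWeights :
    PowerSeries.mk (markedWeights k t) =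
      PowerSeries.map (inlHom R R) (PowerSeries.mk t) + C (inr (t k)) * X ^ k := by
  ext j : 1
  rw [coeff_mk, map_add, coeff_map, coeff_mk, coeff_C_mul_X_pow]
  by_cases h : j = k
  · subst h
    ext <;> simp [markedWeights]
  · simp [markedWeights_of_ne h, h]

theorem snd_coeff_X_pow_mul_mk_markedWeights_pow (n m : ℕ) :
    snd (coeff n (X ^ l * PowerSeries.mk (markedWeights k t) ^ m)) =
      m * t k * coeff n (X ^ (l + k) * PowerSeries.mk t ^ (m - 1)) := by
  have hsq : (C (inr (t k)) * X ^ k : R[ε]⟦X⟧) ^ 2 = 0 := by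
    rw [mul_pow, ← map_pow, pow_two (inr (t k)), inr_mul_inr, map_zero, zero_mul]
  have hpow := Polynomial.eval_add_of_sq_eq_zero (.X ^ m)
    (PowerSeries.map (inlHom R R) (PowerSeries.mk t)) _ hsq
  simp only [Polynomial.eval_pow, Polynomial.eval_X, Polynomial.derivative_X_pow,
    Polynomial.eval_mul, map_natCast, Polynomial.eval_natCast] at hpow
  have hexpand : X ^ l * PowerSeries.mk (markedWeights k t) ^ m =
      PowerSeries.map (inlHom R R) (X ^ l * PowerSeries.mk t ^ m) +
        C ((m : R[ε]) * inr (t k)) *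
          PowerSeries.map (inlHom R R) (X ^ (l + k) * PowerSeries.mk t ^ (m - 1)) := by
    rw [mk_markedWeights, hpow]
    simp only [map_mul, map_pow, map_X, map_natCast]
    ring
  rw [hexpand, map_add, coeff_C_mul, coeff_map, coeff_map]
  simp [mul_assoc, mul_left_comm]

variable [IsAddTorsionFree R]

theorem sum_numBlocksOfSize_mul_blockWeight (ht : t 0 = 1) (hk : 1 ≤ k) (n : ℕ) :
    ∑ π : NCPart n, numBlocksOfSize k π * blockWeight t π.1 =
      t k * coeff n (X ^ k * PowerSeries.mk t ^ n) := by
  have ht' : markedWeights k t 0 = 1 := by simp [markedWeights_of_ne (show 0 ≠ k by omega), ht]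
  have h := congrArg snd (succ_mul_sum_blockWeight ht' n)
  have hsnd := snd_coeff_X_pow_mul_mk_markedWeights_pow (k := k) (l := 0) (t := t) n (n + 1)
  rw [pow_zero, one_mul, zero_add, Nat.add_sub_cancel] at hsnd
  rw [hsnd] at h
  refine nsmul_right_injective n.succ_ne_zero ?_
  simpa [blockWeight_markedWeights, snd_sum, mul_assoc] using h

theorem sum_numBlocksOfSize_mul_numBlocksOfSize_mul_blockWeight (ht : t 0 = 1) (hk : 1 ≤ k)
    (hl : 1 ≤ l) (hkl : k ≠ l) (n : ℕ) :
    ∑ π : NCPart n, numBlocksOfSize k π * numBlocksOfSize l π * blockWeight t π.1 =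
      n * t k * t l * coeff n (X ^ (k + l) * PowerSeries.mk t ^ (n - 1)) := by
  have ht' : markedWeights l t 0 = 1 := by simp [markedWeights_of_ne (show 0 ≠ l by omega), ht]
  have h := congrArg snd (sum_numBlocksOfSize_mul_blockWeight ht' hk n)
  rw [markedWeights_of_ne hkl, DualNumber.snd_mul, snd_coeff_X_pow_mul_mk_markedWeights_pow] at h
  simpa [blockWeight_markedWeights, snd_sum, mul_assoc, mul_left_comm] using h

end Moments

section Counting

theorem choose_mul_descFactorial_eq (a b r j : ℕ) :
    (a + b).choose a * (a + r + (b + j)).descFactorial (r + j) =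
      (a + r + (b + j)).choose (a + r) * (a + r).descFactorial r * (b + j).descFactorial j := by
  have hpos : 0 < a.factorial * b.factorial := by positivity
  refine Nat.eq_of_mul_eq_mul_right hpos ?_
  have ha := Nat.factorial_mul_descFactorial (Nat.le_add_left r a)
  have hb := Nat.factorial_mul_descFactorial (Nat.le_add_left j b)
  have hab := Nat.factorial_mul_descFactorial (show r + j ≤ a + r + (b + j) by omega)
  rw [Nat.add_sub_cancel] at ha hb
  rw [show a + r + (b + j) - (r + j) = a + b by omega] at hab
  calc (a + b).choose a * (a + r + (b + j)).descFactorial (r + j) * (a.factorial * b.factorial)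
    _ = (a + b).factorial * (a + r + (b + j)).descFactorial (r + j) := by
      rw [← Nat.add_choose_mul_factorial_mul_factorial a b, Nat.choose_symm_add]
      ring
    _ = (a + r + (b + j)).choose (a + r) * (a + r).factorial * (b + j).factorial := by
      rw [hab, Nat.choose_symm_add, Nat.add_choose_mul_factorial_mul_factorial]
    _ = _ := by
      rw [← ha, ← hb]
      ring

theorem coeff_X_pow_mul_mk_one_pow {R : Type*} [CommRing R] {r m : ℕ} (hr : r ≤ m) (n j : ℕ) :
    coeff (R := R) n (X ^ j * PowerSeries.mk 1 ^ (m - r + 1)) * (m + n).descFactorial (r + j) =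
      (m + n).choose m * m.descFactorial r * n.descFactorial j := by
  rw [coeff_X_pow_mul', mk_one_pow_eq_mk_choose_add R (m - r), coeff_mk]
  split_ifs with hj
  · obtain ⟨a, rfl⟩ := Nat.exists_eq_add_of_le' hr
    obtain ⟨b, rfl⟩ := Nat.exists_eq_add_of_le' hj
    rw [Nat.add_sub_cancel, Nat.add_sub_cancel]
    exact_mod_cast congrArg (Nat.cast : ℕ → R) (choose_mul_descFactorial_eq a b r j)
  · simp [Nat.descFactorial_of_lt (not_le.1 hj)]

theorem succ_mul_card_NCPart (n : ℕ) : (n + 1) * Fintype.card (NCPart n) = (n + n).choose n := by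
  have h := succ_mul_sum_blockWeight (R := ℤ) (t := 1) rfl n
  have hcoeff := coeff_X_pow_mul_mk_one_pow (R := ℤ) (Nat.zero_le n) n 0
  simp only [blockWeight, Pi.one_apply, prod_const_one, sum_const, card_univ, nsmul_one] at h
  simp only [pow_zero, one_mul, add_zero, Nat.sub_zero, Nat.descFactorial_zero, Nat.cast_one,
    mul_one] at hcoeff
  exact_mod_cast h.trans hcoeff

/-- The normalised falling factorial `n (n - 1) ⋯ (n - k + 1) / n ^ k` as a function of
`x = 1 / n`. -/
def fallingRatio (k : ℕ) (x : ℝ) : ℝ := ∏ i ∈ range k, (1 - i * x)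

theorem cast_descFactorial_eq_pow_mul_fallingRatio {n : ℕ} (hn : n ≠ 0) (k : ℕ) :
    (n.descFactorial k : ℝ) = n ^ k * fallingRatio k (n : ℝ)⁻¹ := by
  have hfactor : ∀ i ∈ range k, (n : ℝ) - i = n * (1 - i * (n : ℝ)⁻¹) := fun i _ => by
    field_simp
  rw [← descPochhammer_eval_eq_descFactorial, descPochhammer_eval_eq_prod_range,
    prod_congr rfl hfactor, prod_mul_distrib, prod_const, card_range, fallingRatio]

/-- The coefficient of `X ^ n` in `X ^ j * (1 - X)⁻¹ ^ (n - r + 1)`, divided by the number of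
non-crossing partitions of `[n]` and by `n / 2 ^ (r + j)`, as a function of `x = 1 / n`. The cases
`r = 1` and `r = 2` govern the first and second moments of the numbers of blocks. -/
noncomputable def momentRatio (r j : ℕ) (x : ℝ) : ℝ :=
  (1 + x) * fallingRatio r x * fallingRatio j x / fallingRatio (r + j) (x / 2)

theorem coeff_div_card_NCPart {n r j : ℕ} (hn : n ≠ 0) (hr : r ≤ n) (hrj : r + j ≤ 2 * n) :
    coeff n (X ^ j * (PowerSeries.mk 1 : ℝ⟦X⟧) ^ (n - r + 1)) / Fintype.card (NCPart n) =
      n / 2 ^ (r + j) * momentRatio r j (n : ℝ)⁻¹ := by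
  have hcoeff := coeff_X_pow_mul_mk_one_pow (R := ℝ) hr n j
  have hcard : ((n : ℝ) + 1) * Fintype.card (NCPart n) = (n + n).choose n := by
    exact_mod_cast succ_mul_card_NCPart n
  have hcard0 : (Fintype.card (NCPart n) : ℝ) ≠ 0 := by
    intro h
    rw [h, mul_zero, eq_comm, Nat.cast_eq_zero, Nat.choose_eq_zero_iff] at hcard
    omega
  have hn' : (n : ℝ) ≠ 0 := Nat.cast_ne_zero.2 hn
  have hdesc : ((n + n).descFactorial (r + j) : ℝ) =
      (2 * n) ^ (r + j) * fallingRatio (r + j) ((n : ℝ)⁻¹ / 2) := by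
    rw [cast_descFactorial_eq_pow_mul_fallingRatio (by omega)]
    push_cast
    rw [← two_mul, mul_inv, mul_comm (2⁻¹ : ℝ), div_eq_mul_inv]
  have hfall : fallingRatio (r + j) ((n : ℝ)⁻¹ / 2) ≠ 0 := by
    intro h
    rw [h, mul_zero, Nat.cast_eq_zero, Nat.descFactorial_eq_zero_iff_lt] at hdesc
    omega
  rw [hdesc, ← hcard, cast_descFactorial_eq_pow_mul_fallingRatio hn,
    cast_descFactorial_eq_pow_mul_fallingRatio hn] at hcoeff
  rw [momentRatio, div_eq_iff hcard0]
  generalize fallingRatio (r + j) ((n : ℝ)⁻¹ / 2) = D at hcoeff hfall ⊢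
  refine mul_right_cancel₀ (mul_ne_zero (pow_ne_zero (r + j) (mul_ne_zero two_ne_zero hn')) hfall)
    (hcoeff.trans ?_)
  field_simp
  ring

theorem mean_numBlocksOfSize {n k : ℕ} (hk : 1 ≤ k) (hkn : 1 + k ≤ 2 * n) :
    (∑ π : NCPart n, (numBlocksOfSize k π : ℝ)) / Fintype.card (NCPart n) =
      n / 2 ^ (1 + k) * momentRatio 1 k (n : ℝ)⁻¹ := by
  have h := sum_numBlocksOfSize_mul_blockWeight (R := ℝ) (t := 1) rfl hk n
  simp only [blockWeight, Pi.one_apply, prod_const_one, mul_one, one_mul] at h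
  rw [h, ← coeff_div_card_NCPart (by omega) (by omega) hkn, Nat.sub_add_cancel (by omega)]

theorem mean_numBlocksOfSize_mul_numBlocksOfSize {n k l : ℕ} (hk : 1 ≤ k) (hl : 1 ≤ l)
    (hkl : k ≠ l) (hn : 2 + (k + l) ≤ 2 * n) :
    (∑ π : NCPart n, (numBlocksOfSize k π : ℝ) * numBlocksOfSize l π) /
        Fintype.card (NCPart n) =
      n ^ 2 / 2 ^ (2 + (k + l)) * momentRatio 2 (k + l) (n : ℝ)⁻¹ := by
  have h := sum_numBlocksOfSize_mul_numBlocksOfSize_mul_blockWeight (R := ℝ) (t := 1) rfl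
    hk hl hkl n
  simp only [blockWeight, Pi.one_apply, prod_const_one, mul_one] at h
  have hcoeff := coeff_div_card_NCPart (n := n) (r := 2) (j := k + l) (by omega) (by omega) hn
  rw [show n - 2 + 1 = n - 1 by omega] at hcoeff
  rw [h, mul_div_assoc, hcoeff]
  ring

theorem covBlocksOfSize_eq {n k l : ℕ} (hk : 1 ≤ k) (hl : 1 ≤ l) (hkl : k ≠ l)
    (hn : 2 + (k + l) ≤ 2 * n) :
    covBlocksOfSize k l n = n ^ 2 / 2 ^ (k + l + 2) *
      (momentRatio 2 (k + l) (n : ℝ)⁻¹ -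
        momentRatio 1 k (n : ℝ)⁻¹ * momentRatio 1 l (n : ℝ)⁻¹) := by
  rw [covBlocksOfSize, mean_numBlocksOfSize_mul_numBlocksOfSize hk hl hkl hn,
    mean_numBlocksOfSize hk (by omega), mean_numBlocksOfSize hl (by omega)]
  field_simp
  ring

end Counting

section Asymptotics

open Asymptotics Topology

theorem isBigO_sub_sub_smul_of_hasDerivAt {𝕜 E : Type*} [NontriviallyNormedField 𝕜]
    [NormedAddCommGroup E] [NormedSpace 𝕜 E] {f : 𝕜 → E} {x : 𝕜} {c : E}
    (hf : AnalyticAt 𝕜 f x) (hc : HasDerivAt f c x) :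
    (fun y => f (x + y) - f x - y • c) =O[𝓝 0] fun y => ‖y‖ ^ 2 := by
  obtain ⟨p, hp⟩ := hf
  refine (hp.isBigO_sub_partialSum_pow 2).congr_left fun y => ?_
  have h0 : p 0 (fun _ => y) = f x := hp.coeff_zero _
  have h1 : p 1 (fun _ => y) = y • c := by
    rw [p.apply_eq_pow_smul_coeff, pow_one, hc.unique hp.hasDerivAt]
    rfl
  simp only [FormalMultilinearSeries.partialSum, sum_range_succ, sum_range_zero, zero_add, h0, h1]
  abel

theorem analyticAt_fallingRatio (k : ℕ) (x : ℝ) : AnalyticAt ℝ (fallingRatio k) x :=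
  Finset.analyticAt_fun_prod _ fun i _ => by fun_prop

theorem fallingRatio_zero (k : ℕ) : fallingRatio k 0 = 1 := by simp [fallingRatio]

theorem hasDerivAt_fallingRatio_zero (k : ℕ) :
    HasDerivAt (fallingRatio k) (-(k * (k - 1) / 2)) 0 := by
  induction k with
  | zero =>
    have hconst : fallingRatio 0 = fun _ => 1 := by simp [funext_iff, fallingRatio]
    simpa [hconst] using hasDerivAt_const (0 : ℝ) (1 : ℝ)
  | succ k ih =>
    have hfactor : HasDerivAt (fun x : ℝ => 1 - k * x) (-k) 0 := by
      simpa using ((hasDerivAt_id (0 : ℝ)).const_mul (k : ℝ)).const_sub 1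
    have h := ih.mul hfactor
    rw [fallingRatio_zero] at h
    refine (h.congr_deriv ?_).congr_of_eventuallyEq (.of_forall fun x => prod_range_succ _ _)
    push_cast
    ring

theorem analyticAt_momentRatio_zero (r j : ℕ) : AnalyticAt ℝ (momentRatio r j) 0 := by
  have hfall := analyticAt_fallingRatio
  refine AnalyticAt.div (by fun_prop) ?_ ?_
  · exact (hfall (r + j) _).comp (f := fun x => x / 2) (by fun_prop)
  · simp [fallingRatio_zero]

theorem momentRatio_zero (r j : ℕ) : momentRatio r j 0 = 1 := by
  simp [momentRatio, fallingRatio_zero]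

theorem hasDerivAt_momentRatio_zero (r j : ℕ) :
    HasDerivAt (momentRatio r j)
      (1 - r * (r - 1) / 2 - j * (j - 1) / 2 + (r + j) * (r + j - 1) / 4) 0 := by
  have hnum := (((hasDerivAt_id (0 : ℝ)).const_add 1).mul (hasDerivAt_fallingRatio_zero r)).mul
    (hasDerivAt_fallingRatio_zero j)
  have hhalf : HasDerivAt (fun x : ℝ => x / 2) (1 / 2) 0 := (hasDerivAt_id (0 : ℝ)).div_const 2
  have hden : HasDerivAt (fun x : ℝ => fallingRatio (r + j) (x / 2)) _ 0 :=
    HasDerivAt.comp (h₂ := fallingRatio (r + j)) 0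
      (by simpa using hasDerivAt_fallingRatio_zero (r + j)) hhalf
  refine (hnum.div hden (by simp [fallingRatio_zero])).congr_deriv ?_
  simp only [id_eq, Pi.mul_apply, zero_div, add_zero, fallingRatio_zero]
  ring

theorem momentRatio_sub_mul_isBigO (k l : ℕ) :
    (fun x => momentRatio 2 (k + l) x - momentRatio 1 k x * momentRatio 1 l x +
        x * ((2 + ((k : ℝ) - 1) * (l - 1)) / 2)) =O[𝓝 0] fun x => x ^ 2 := by
  have hanalytic := (analyticAt_momentRatio_zero 2 (k + l)).sub
    ((analyticAt_momentRatio_zero 1 k).mul (analyticAt_momentRatio_zero 1 l))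
  have hderiv := (hasDerivAt_momentRatio_zero 2 (k + l)).sub
    ((hasDerivAt_momentRatio_zero 1 k).mul (hasDerivAt_momentRatio_zero 1 l))
  refine (isBigO_sub_sub_smul_of_hasDerivAt hanalytic hderiv).congr (fun x => ?_) fun x => ?_
  · simp only [Pi.sub_apply, Pi.mul_apply, zero_add, momentRatio_zero, smul_eq_mul]
    push_cast
    ring
  · simp

theorem covBlocksOfSize_add_isBigO_one {k l : ℕ} (hk : 1 ≤ k) (hl : 1 ≤ l) (hkl : k ≠ l) :
    (fun n : ℕ => covBlocksOfSize k l n +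
      (n : ℝ) / 2 ^ (k + l + 3) * (2 + ((k : ℝ) - 1) * (l - 1))) =O[atTop] fun _ => (1 : ℝ) := by
  have hinv := (momentRatio_sub_mul_isBigO k l).comp_tendsto
    (tendsto_inv_atTop_nhds_zero_nat (𝕜 := ℝ))
  have hscaled := (isBigO_refl (fun n : ℕ => (n : ℝ) ^ 2 / 2 ^ (k + l + 2)) atTop).mul hinv
  have hone : (fun n : ℕ => (n : ℝ) ^ 2 / 2 ^ (k + l + 2) * (n : ℝ)⁻¹ ^ 2) =O[atTop]
      fun _ => (1 : ℝ) := by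
    refine (isBigO_const_const (1 / 2 ^ (k + l + 2) : ℝ) one_ne_zero atTop).congr' ?_ .rfl
    filter_upwards [eventually_ne_atTop 0] with n hn
    field_simp
  refine (hscaled.congr' ?_ .rfl).trans hone
  filter_upwards [eventually_ge_atTop (2 + (k + l))] with n hn
  have hn0 : n ≠ 0 := by omega
  rw [covBlocksOfSize_eq hk hl hkl (by omega), Function.comp_apply]
  field_simp
  ring

end Asymptotics

/-- For fixed `k ≠ l` with `k, l ≥ 1`,
`Cov(X_n^{(k)}, X_n^{(l)}) = −(n/2^{k+l+3})·(2 + (k − 1)(l − 1)) + O(1)`: there is a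
constant `K` (possibly depending on `k, l`) bounding the difference for all `n ≥ 1`.
In particular, the numbers of blocks of different sizes are negatively correlated
for all large `n`. -/
theorem covBlocksOfSize_asymptotic (k l : ℕ) (hk : 1 ≤ k) (hl : 1 ≤ l) (hkl : k ≠ l) :
    (∃ K : ℝ, ∀ n : ℕ, 1 ≤ n →
      |covBlocksOfSize k l n +
        ((n : ℝ) / 2 ^ (k + l + 3)) * (2 + ((k : ℝ) - 1) * ((l : ℝ) - 1))| ≤ K) ∧
    (∀ᶠ n : ℕ in atTop, covBlocksOfSize k l n < 0) := by
  obtain ⟨K, hK⟩ := Asymptotics.isBigO_one_nat_atTop_iff.1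
    (covBlocksOfSize_add_isBigO_one hk hl hkl)
  refine ⟨⟨K, fun n _ => hK n⟩, ?_⟩
  have hc : 0 < (2 + ((k : ℝ) - 1) * (l - 1)) / 2 ^ (k + l + 3) := by
    have hk' : 0 ≤ (k : ℝ) - 1 := sub_nonneg.2 (by exact_mod_cast hk)
    have hl' : 0 ≤ (l : ℝ) - 1 := sub_nonneg.2 (by exact_mod_cast hl)
    positivity
  have htendsto := tendsto_natCast_atTop_atTop (R := ℝ).atTop_mul_const hc
  filter_upwards [htendsto.eventually_gt_atTop K] with n hn
  rw [mul_div_assoc', ← div_mul_eq_mul_div] at hn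
  linarith [(abs_le.1 (hK n)).2]
end

section
/- Fix integers n ≥ 0 and l ≥ 1, and let N^{(l)}_{n,k} be the number of non-crossing partitions of [n] with exactly k blocks of size l. Then, as an identity of polynomials in q over ℚ, (n + 1)·Σ_{k=0}^{n} N^{(l)}_{n,k} q^k = Σ_{j≥0, j·l ≤ n} binom(n+1, j)·(q − 1)^j·binom(2n − j(l+1), n − j). (This is the Lagrange-inversion formula C^{(l)}_n(q) = (1/(n+1))·[u^n]((1/(1−u)) + u^l(q−1))^{n+1} written out explicitly.) -/
/-- `N^{(l)}_{n,k}`: the number of non-crossing partitions of `[n]` having exactly `k`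
blocks of size `l`. -/
noncomputable def Nblk (l n k : ℕ) : ℕ := Nat.card {π : NCPart n // numBlocksOfSize l π = k}

/-!
Scan `[n]` from the left. Removing the least remaining element `b` leaves the rest `L` of its block
*exposed*: no later block may enclose a point of `L`. Being non-crossing means that at each such
step `L` lies below all points that are exposed already. Give a block of size `s ≥ 1` the weight
`f_s = [u^s] f`, and let `A m r` be the sum of the weights over all choices of `r` exposed points
among `m` given points and all admissible partitions of the others. Then
`A (m+1) 0 = ∑_{s ≥ 0} f_(s+1) A m s` and `A (m+1) (r+1) = ∑_{s ≥ 0} f_s A m (r+s)`,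
where `f_0 = 1` accounts for the case that the least point is itself exposed. The solution is
`A m r = [u^m] u^r f^m (f - u f')`, and `(n+1) [u^n] f^n (f - u f') = [u^n] f^(n+1)` gives the
Lagrange form of `A n 0`. To count blocks of size `l` take `f = 1/(1-u) + (q-1) u^l`.
-/

section Development

open Finset PowerSeries

section PowerSeries

section CommSemiring

variable {R : Type*} [CommSemiring R]

theorem coeff_succ_X_pow_mul_mul (f g : R⟦X⟧) (n r : ℕ) :
    coeff (n + 1) (X ^ r * (f * g)) = coeff 0 f * coeff (n + 1) (X ^ r * g) +
      ∑ s ∈ range (n + 1), coeff (s + 1) f * coeff n (X ^ (r + s) * g) := by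
  rw [mul_left_comm, coeff_mul, Nat.sum_antidiagonal_succ,
    Nat.sum_antidiagonal_eq_sum_range_succ_mk]
  congr 1
  refine sum_congr rfl fun s hs => ?_
  rw [add_comm r, pow_add, mul_assoc, coeff_X_pow_mul' _ s n, if_pos (mem_range_succ_iff.1 hs)]

theorem coeff_X_mul_derivative (f : R⟦X⟧) (n : ℕ) :
    coeff n (X * derivative R f) = n * coeff n f := by
  cases n with
  | zero => simp
  | succ n => rw [coeff_succ_X_mul, coeff_derivative]; push_cast; ring

theorem map_derivative {S : Type*} [CommSemiring S] (φ : R →+* S) (f : R⟦X⟧) :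
    map φ (derivative R f) = derivative S (map φ f) := by
  ext n
  simp [coeff_derivative]

end CommSemiring

variable {R : Type*} [CommRing R]

theorem succ_mul_coeff_pow_mul_sub_X_mul_derivative (f : R⟦X⟧) (n k : ℕ) :
    (n + 1 : R) * coeff k (f ^ n * (f - X * derivative R f)) =
      (n + 1 - k) * coeff k (f ^ (n + 1)) := by
  have h : ((n + 1 : ℕ) : R⟦X⟧) * (f ^ n * (f - X * derivative R f)) =
      ((n + 1 : ℕ) : R⟦X⟧) * f ^ (n + 1) - X * derivative R (f ^ (n + 1)) := by
    rw [derivative_pow, Nat.add_sub_cancel]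
    ring
  have hcoeff := congrArg (coeff k) h
  rw [map_sub, coeff_X_mul_derivative, ← nsmul_eq_mul, ← nsmul_eq_mul, map_nsmul, map_nsmul,
    nsmul_eq_mul, nsmul_eq_mul, Nat.cast_succ] at hcoeff
  rw [hcoeff]
  ring

theorem coeff_succ_pow_mul_sub_X_mul_derivative (f : R⟦X⟧) (n : ℕ) :
    coeff (n + 1) (f ^ n * (f - X * derivative R f)) = 0 := by
  -- `n + 1` may be a zero divisor in `R`, but not for the power series with universal coefficients.
  let F : (MvPolynomial ℕ ℤ)⟦X⟧ := mk MvPolynomial.X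
  let φ : MvPolynomial ℕ ℤ →+* R := MvPolynomial.eval₂Hom (Int.castRingHom R) fun s => coeff s f
  have hF : map φ F = f := by ext s; simp [F, φ]
  have hzero : coeff (n + 1) (F ^ n * (F - X * derivative _ F)) = 0 := by
    refine (mul_eq_zero.1 ?_).resolve_left (Nat.cast_add_one_ne_zero n)
    rw [succ_mul_coeff_pow_mul_sub_X_mul_derivative]
    push_cast
    ring
  rw [← hF, ← map_derivative, ← map_X φ, ← map_mul, ← map_sub, ← map_pow, ← map_mul, coeff_map,
    hzero, map_zero]

end PowerSeries

section InitialSegments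

variable {α : Type*} [LinearOrder α]

theorem exists_initial_subset_card_eq {V : Finset α} {s : ℕ} (hs : s ≤ #V) :
    ∃ L ⊆ V, #L = s ∧ ∀ y ∈ L, ∀ u ∈ V \ L, y < u := by
  induction V using Finset.induction_on_max with
  | empty => exact ⟨∅, by simp_all⟩
  | insert m V hm ih =>
    have hmV : m ∉ V := fun h => (hm m h).false
    rw [card_insert_of_notMem hmV] at hs
    rcases hs.eq_or_lt with rfl | hs
    · exact ⟨insert m V, Subset.rfl, card_insert_of_notMem hmV, by simp⟩
    · obtain ⟨L, hLV, hcard, hlt⟩ := ih (Nat.lt_succ_iff.1 hs)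
      exact ⟨L, hLV.trans (subset_insert m V), hcard, by grind⟩

theorem initial_subset_eq_of_card_eq {V L L' : Finset α} (hL : L ⊆ V) (hL' : L' ⊆ V)
    (hlt : ∀ y ∈ L, ∀ u ∈ V \ L, y < u) (hlt' : ∀ y ∈ L', ∀ u ∈ V \ L', y < u)
    (hcard : #L = #L') : L = L' := by
  by_contra hne
  obtain ⟨x, hx, hx'⟩ := not_subset.1 fun h => hne (eq_of_subset_of_card_le h hcard.ge)
  obtain ⟨y, hy, hy'⟩ := not_subset.1 fun h => hne (eq_of_subset_of_card_le h hcard.le).symm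
  exact lt_asymm (hlt x hx y (mem_sdiff.2 ⟨hL' hy, hy'⟩)) (hlt' y hy x (mem_sdiff.2 ⟨hL hx, hx'⟩))

theorem sum_powersetCard_sum_powerset_sdiff {M : Type*} [AddCommMonoid M] (T : Finset α) (r : ℕ)
    (g : ℕ → Finset α → M) :
    ∑ U ∈ T.powersetCard r, ∑ L ∈ (T \ U).powerset with ∀ y ∈ L, ∀ u ∈ U, y ≤ u, g #L (L ∪ U) =
      ∑ s ∈ range (#T + 1), ∑ V ∈ T.powersetCard (r + s), g s V := by
  rw [sum_sigma', sum_sigma']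
  -- `L` consists of the least `#L` elements of `L ∪ U`.
  refine sum_bij (fun p _ => ⟨#p.2, p.2 ∪ p.1⟩) ?_ ?_ ?_ fun _ _ => rfl
  · rintro ⟨U, L⟩ h
    simp only [mem_sigma, mem_powersetCard, mem_filter, mem_powerset, subset_sdiff] at h
    obtain ⟨⟨hUT, rfl⟩, ⟨hLT, hLU⟩, -⟩ := h
    simp only [mem_sigma, mem_range, mem_powersetCard]
    exact ⟨Nat.lt_succ_of_le (card_le_card hLT), union_subset hLT hUT,
      by rw [card_union_of_disjoint hLU, add_comm]⟩
  · rintro ⟨U, L⟩ h ⟨U', L'⟩ h' heq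
    simp only [mem_sigma, mem_powersetCard, mem_filter, mem_powerset, subset_sdiff] at h h'
    simp only [Sigma.mk.injEq, heq_eq_eq] at heq
    obtain ⟨hcard, hunion⟩ := heq
    have hLL' : L = L' := initial_subset_eq_of_card_eq (V := L ∪ U) subset_union_left
      (hunion ▸ subset_union_left) (by grind) (by rw [hunion]; grind) hcard
    subst hLL'
    have hUU' : U = U' := by
      rw [← union_sdiff_cancel_left h.2.1.2, hunion, union_sdiff_cancel_left h'.2.1.2]
    rw [hUU']
  · rintro ⟨s, V⟩ h
    simp only [mem_sigma, mem_range, mem_powersetCard] at h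
    obtain ⟨-, hVT, hcard⟩ := h
    obtain ⟨L, hLV, rfl, hlt⟩ := exists_initial_subset_card_eq (hcard ▸ Nat.le_add_left s r)
    refine ⟨⟨V \ L, L⟩, ?_, by simp [hLV]⟩
    simp only [mem_sigma, mem_powersetCard, mem_filter, mem_powerset, subset_sdiff]
    exact ⟨⟨sdiff_subset.trans hVT, by grind [card_sdiff_of_subset]⟩,
      ⟨hLV.trans hVT, disjoint_sdiff⟩, fun y hy u hu => (hlt y hy u hu).le⟩

end InitialSegments

section Finpartition

variable {α : Type*} [DecidableEq α] {b : α} {S : Finset α}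

theorem sup_erase_parts (P : Finpartition S) {B : Finset α} (hB : B ∈ P.parts) :
    (P.parts.erase B).sup id = S \ B := by
  have hdisj : Disjoint B ((P.parts.erase B).sup id) :=
    P.supIndep (erase_subset _ _) hB (notMem_erase _ _)
  have hunion : B ∪ (P.parts.erase B).sup id = S := by
    rw [← sup_eq_union, ← id_eq B, ← sup_insert, id_eq, insert_erase hB, P.sup_parts]
  rw [← union_sdiff_cancel_left hdisj, hunion]

theorem exists_parts_eq_insert (hb : b ∉ S) (P : Finpartition (insert b S)) :
    ∃ L ⊆ S, ∃ Q : Finpartition (S \ L), P.parts = insert (insert b L) Q.parts := by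
  have hpart : P.part b ∈ P.parts := by simp
  have hmem : b ∈ P.part b := by simp
  have hsdiff : insert b S \ P.part b = S \ (P.part b).erase b := by grind
  refine ⟨(P.part b).erase b, subset_insert_iff.1 (P.part_subset b),
    P.ofSubset (erase_subset _ _) ((sup_erase_parts P hpart).trans hsdiff), ?_⟩
  rw [P.ofSubset_parts, insert_erase hmem, insert_erase hpart]

theorem insert_insert_inj {L L' : Finset α} {F F' : Finset (Finset α)} (hL : b ∉ L)
    (hL' : b ∉ L') (hF : ∀ B ∈ F, b ∉ B) (hF' : ∀ B ∈ F', b ∉ B)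
    (h : insert (insert b L) F = insert (insert b L') F') : L = L' ∧ F = F' := by
  have hmem : insert b L ∈ insert (insert b L') F' := h ▸ mem_insert_self _ _
  have hinsert : insert b L = insert b L' :=
    (mem_insert.1 hmem).resolve_right fun h => hF' _ h (mem_insert_self b L)
  refine ⟨by rw [← erase_insert hL, hinsert, erase_insert hL'], ?_⟩
  rw [← erase_insert fun h => hF _ h (mem_insert_self b L), h, hinsert,
    erase_insert fun h => hF' _ h (mem_insert_self b L')]

theorem sum_finpartition_insert {M : Type*} [AddCommMonoid M] (hb : b ∉ S)
    (f : Finset (Finset α) → M) :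
    ∑ P : Finpartition (insert b S), f P.parts =
      ∑ L ∈ S.powerset, ∑ Q : Finpartition (S \ L), f (insert (insert b L) Q.parts) := by
  have hdisj (L : Finset α) : Disjoint (S \ L) (insert b L) := by
    simp [disjoint_insert_right, hb, sdiff_disjoint]
  have hunion {L : Finset α} (hL : L ⊆ S) : S \ L ⊔ insert b L = insert b S := by
    rw [sup_eq_union, union_insert, sdiff_union_of_subset hL]
  rw [sum_sigma']
  symm
  refine sum_bij (fun p hp => p.2.extend (insert_ne_empty b p.1) (hdisj p.1)
    (hunion (mem_powerset.1 (mem_sigma.1 hp).1))) (fun _ _ => mem_univ _) ?_ ?_ fun _ _ => rfl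
  · rintro ⟨L, Q⟩ hL ⟨L', Q'⟩ hL' heq
    simp only [mem_sigma, mem_powerset, mem_univ, and_true] at hL hL'
    obtain ⟨rfl, hparts⟩ := insert_insert_inj (fun h => hb (hL h)) (fun h => hb (hL' h))
      (fun B hB h => hb (sdiff_subset (Q.subset hB h)))
      (fun B hB h => hb (sdiff_subset (Q'.subset hB h))) (congrArg Finpartition.parts heq)
    rw [Finpartition.ext hparts]
  · intro P _
    obtain ⟨L, hL, Q, hparts⟩ := exists_parts_eq_insert hb P
    exact ⟨⟨L, Q⟩, by simp [hL], Finpartition.ext hparts.symm⟩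

end Finpartition

section NonCrossing

variable {α : Type*} [LinearOrder α]

/-- `Crosses B C`: there are `x < y < z < w` with `x, z ∈ B` and `y, w ∈ C`. The relation is not
symmetric: the crossing has to start in `B`. -/
def Crosses (B C : Finset α) : Prop :=
  ∃ x ∈ B, ∃ y ∈ C, ∃ z ∈ B, ∃ w ∈ C, x < y ∧ y < z ∧ z < w

/-- `Encloses B u`: the point `u` lies strictly between two elements of `B`. -/
def Encloses (B : Finset α) (u : α) : Prop :=
  ∃ x ∈ B, ∃ y ∈ B, x < u ∧ u < y

/-- The blocks in `F` are non-crossing, and none of them encloses a point of `U`. Here `U` is the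
set of exposed points: those in blocks which start to the left of all blocks in `F`. -/
structure IsNonCrossingOver (U : Finset α) (F : Finset (Finset α)) : Prop where
  pairwise_not_crosses : (F : Set (Finset α)).Pairwise fun B C => ¬Crosses B C
  not_encloses : ∀ B ∈ F, ∀ u ∈ U, ¬Encloses B u

variable {b : α} {L U : Finset α} {F : Finset (Finset α)}

theorem encloses_insert_iff {u : α} (hu : b < u) : Encloses (insert b L) u ↔ ∃ y ∈ L, u < y := by
  constructor
  · rintro ⟨x, -, y, hy, -, huy⟩
    exact ⟨y, mem_of_mem_insert_of_ne hy (hu.trans huy).ne', huy⟩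
  · rintro ⟨y, hy, huy⟩
    exact ⟨b, mem_insert_self b L, y, mem_insert_of_mem hy, hu, huy⟩

theorem crosses_insert_or_crosses_insert_iff {C : Finset α} (hC : ∀ x ∈ C, b < x) :
    Crosses (insert b L) C ∨ Crosses C (insert b L) ↔ ∃ u ∈ L, Encloses C u := by
  constructor
  · rintro (⟨x, -, y, hy, z, hz, w, hw, -, hyz, hzw⟩ | ⟨x, hx, y, hy, z, hz, _, _, hxy, hyz, -⟩)
    · exact ⟨z, mem_of_mem_insert_of_ne hz ((hC y hy).trans hyz).ne', y, hy, w, hw, hyz, hzw⟩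
    · exact ⟨y, mem_of_mem_insert_of_ne hy ((hC x hx).trans hxy).ne', x, hx, z, hz, hxy, hyz⟩
  · rintro ⟨u, hu, x, hx, y, hy, hxu, huy⟩
    exact .inl ⟨b, mem_insert_self b L, x, hx, u, mem_insert_of_mem hu, y, hy, hC x hx, hxu, huy⟩

theorem isNonCrossingOver_insert_point_iff (hF : ∀ B ∈ F, ∀ x ∈ B, b < x) :
    IsNonCrossingOver (insert b U) F ↔ IsNonCrossingOver U F := by
  have hnot : ∀ B ∈ F, ¬Encloses B b := fun B hB ⟨x, hx, _, _, hxb, _⟩ => hxb.asymm (hF B hB x hx)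
  constructor <;> rintro ⟨hcross, henc⟩ <;> refine ⟨hcross, ?_⟩
  · exact fun B hB u hu => henc B hB u (mem_insert_of_mem hu)
  · exact fun B hB => forall_mem_insert _ _ _ |>.2 ⟨hnot B hB, henc B hB⟩

theorem isNonCrossingOver_iff : IsNonCrossingOver U F ↔
    (F : Set (Finset α)).Pairwise (fun B C => ¬Crosses B C) ∧ ∀ B ∈ F, ∀ u ∈ U, ¬Encloses B u :=
  ⟨fun h => ⟨h.1, h.2⟩, fun h => ⟨h.1, h.2⟩⟩

theorem isNonCrossingOver_insert_block_iff (hU : ∀ u ∈ U, b < u)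
    (hF : ∀ B ∈ F, ∀ x ∈ B, b < x) :
    IsNonCrossingOver U (insert (insert b L) F) ↔
      IsNonCrossingOver (L ∪ U) F ∧ ∀ y ∈ L, ∀ u ∈ U, y ≤ u := by
  have hcross : (∀ C ∈ F, insert b L ≠ C → ¬Crosses (insert b L) C ∧ ¬Crosses C (insert b L)) ↔
      ∀ C ∈ F, ∀ u ∈ L, ¬Encloses C u := by
    refine forall₂_congr fun C hC => ?_
    have hne : insert b L ≠ C := fun h => (hF C hC b (h ▸ mem_insert_self b L)).false
    rw [← not_or, crosses_insert_or_crosses_insert_iff (hF C hC)]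
    simp [hne]
  have hencloses : (∀ u ∈ U, ¬Encloses (insert b L) u) ↔ ∀ y ∈ L, ∀ u ∈ U, y ≤ u := by
    rw [forall₂_congr fun u hu => not_congr (encloses_insert_iff (hU u hu))]
    simp only [not_exists, not_and, not_lt]
    exact ⟨fun h y hy u hu => h u hu y hy, fun h u hu y hy => h y hy u hu⟩
  rw [isNonCrossingOver_iff, coe_insert, Set.pairwise_insert, forall_mem_insert]
  simp only [mem_coe]
  rw [hcross, hencloses, isNonCrossingOver_iff]
  simp only [forall_mem_union, forall_and]
  tauto

section Weights

variable {R : Type*} [CommSemiring R]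

open Classical in
/-- The product of the weights `w #B` of the blocks `B ∈ F` if `F` is non-crossing over the exposed
points `U`, and `0` otherwise. -/
noncomputable def ncWeight (w : ℕ → R) (U : Finset α) (F : Finset (Finset α)) : R :=
  if IsNonCrossingOver U F then ∏ B ∈ F, w #B else 0

/-- The generating function, by block sizes, of the partitions of `S` that are non-crossing over
the exposed points `U`. -/
noncomputable def ncSum (w : ℕ → R) (S U : Finset α) : R :=
  ∑ P : Finpartition S, ncWeight w U P.parts

/-- The generating function, by block sizes, of the pairs of a set `U` of `r` exposed points of `T`
and a partition of the remaining points that is non-crossing over `U`. -/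
noncomputable def ncExposedSum (w : ℕ → R) (T : Finset α) (r : ℕ) : R :=
  ∑ U ∈ T.powersetCard r, ncSum w (T \ U) U

variable (w : ℕ → R) {S T : Finset α}

theorem ncWeight_insert_point (hF : ∀ B ∈ F, ∀ x ∈ B, b < x) :
    ncWeight w (insert b U) F = ncWeight w U F := by
  classical exact if_congr (isNonCrossingOver_insert_point_iff hF) rfl rfl

theorem ncWeight_insert_block (hb : b ∉ L) (hU : ∀ u ∈ U, b < u)
    (hF : ∀ B ∈ F, ∀ x ∈ B, b < x) :
    ncWeight w U (insert (insert b L) F) =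
      if ∀ y ∈ L, ∀ u ∈ U, y ≤ u then w (#L + 1) * ncWeight w (L ∪ U) F else 0 := by
  have hnotMem : insert b L ∉ F := fun h => (hF _ h b (mem_insert_self b L)).false
  have hnc := isNonCrossingOver_insert_block_iff (L := L) hU hF
  rw [ncWeight, ncWeight, prod_insert hnotMem, card_insert_of_notMem hb, mul_ite, mul_zero,
    ← ite_and]
  classical exact if_congr (hnc.trans and_comm) rfl rfl

theorem ncSum_insert_partitioned (hS : ∀ x ∈ S, b < x) (hU : ∀ u ∈ U, b < u) :
    ncSum w (insert b S) U =
      ∑ L ∈ S.powerset with ∀ y ∈ L, ∀ u ∈ U, y ≤ u, w (#L + 1) * ncSum w (S \ L) (L ∪ U) := by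
  have hb : b ∉ S := fun h => (hS b h).false
  simp only [ncSum]
  rw [sum_finpartition_insert hb (ncWeight w U), sum_filter]
  refine sum_congr rfl fun L hL => ?_
  have hbL : b ∉ L := fun h => hb (mem_powerset.1 hL h)
  have hparts (Q : Finpartition (S \ L)) : ∀ B ∈ Q.parts, ∀ x ∈ B, b < x :=
    fun B hB x hx => hS x (sdiff_subset (Q.subset hB hx))
  simp only [ncWeight_insert_block w hbL hU (hparts _)]
  split_ifs
  · rw [mul_sum]
  · rw [sum_const_zero]

theorem ncSum_insert_exposed (hS : ∀ x ∈ S, b < x) : ncSum w S (insert b U) = ncSum w S U :=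
  sum_congr rfl fun P _ => ncWeight_insert_point w fun _ hB x hx => hS x (P.subset hB hx)

theorem sum_ncSum_insert (hT : ∀ x ∈ T, b < x) (r : ℕ) :
    ∑ U ∈ T.powersetCard r, ncSum w (insert b T \ U) U =
      ∑ s ∈ range (#T + 1), w (s + 1) * ncExposedSum w T (r + s) := by
  simp only [ncExposedSum, mul_sum]
  rw [← sum_powersetCard_sum_powerset_sdiff T r fun s V => w (s + 1) * ncSum w (T \ V) V]
  refine sum_congr rfl fun U hU => ?_
  have hUT : U ⊆ T := (mem_powersetCard.1 hU).1
  have hbU : b ∉ U := fun h => (hT b (hUT h)).false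
  rw [insert_sdiff_of_notMem T hbU, ncSum_insert_partitioned w (fun x hx => hT x (sdiff_subset hx))
    fun u hu => hT u (hUT hu)]
  simp only [sdiff_sdiff_left, sup_eq_union, union_comm]

theorem ncExposedSum_insert_zero (hT : ∀ x ∈ T, b < x) :
    ncExposedSum w (insert b T) 0 = ∑ s ∈ range (#T + 1), w (s + 1) * ncExposedSum w T s := by
  simpa [ncExposedSum] using sum_ncSum_insert w hT 0

theorem ncExposedSum_insert_succ (hT : ∀ x ∈ T, b < x) (r : ℕ) :
    ncExposedSum w (insert b T) (r + 1) =
      ncExposedSum w T r + ∑ s ∈ range (#T + 1), w (s + 1) * ncExposedSum w T (r + 1 + s) := by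
  have hb : b ∉ T := fun h => (hT b h).false
  have hnotMem {U : Finset α} (hU : U ∈ T.powersetCard r) : b ∉ U :=
    fun h => hb ((mem_powersetCard.1 hU).1 h)
  have hdisj : Disjoint (T.powersetCard (r + 1)) ((T.powersetCard r).image (insert b)) := by
    rw [disjoint_left]
    intro U hU hU'
    obtain ⟨V, -, rfl⟩ := mem_image.1 hU'
    exact hb ((mem_powersetCard.1 hU).1 (mem_insert_self b V))
  have hinj : Set.InjOn (insert b) (T.powersetCard r : Set (Finset α)) := by
    intro U hU V hV h
    rw [← erase_insert (hnotMem hU), h, erase_insert (hnotMem hV)]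
  rw [ncExposedSum, powersetCard_succ_insert hb, sum_union hdisj, sum_image hinj,
    sum_ncSum_insert w hT, add_comm]
  congr 1
  refine sum_congr rfl fun U _ => ?_
  rw [insert_sdiff_insert, sdiff_insert_of_notMem hb,
    ncSum_insert_exposed w fun x hx => hT x (sdiff_subset hx)]

theorem ncSum_empty (U : Finset α) : ncSum w ∅ U = 1 := by
  have hparts (P : Finpartition (∅ : Finset α)) : P.parts = ∅ := P.parts_eq_empty_iff.2 rfl
  have hnc : IsNonCrossingOver U ∅ := ⟨by simp, by simp⟩
  have hcard : Fintype.card (Finpartition (⊥ : Finset α)) = 1 := Fintype.card_unique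
  rw [bot_eq_empty] at hcard
  simp [ncSum, ncWeight, hparts, hnc, hcard]

theorem isNonCrossingOver_empty_iff {n : ℕ} (P : Finpartition (univ : Finset (Fin n))) :
    IsNonCrossingOver ∅ P.parts ↔ IsNonCrossing P := by
  constructor
  · rintro ⟨h, -⟩ a b c d hab hbc hcd B hB B' hB' ha hc hb hd
    by_contra hne
    exact h hB hB' hne ⟨a, ha, b, hb, c, hc, d, hd, hab, hbc, hcd⟩
  · refine fun h => ⟨?_, by simp⟩
    rintro B hB C hC hne ⟨a, ha, b, hb, c, hc, d, hd, hab, hbc, hcd⟩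
    exact hne (h a b c d hab hbc hcd B hB C hC ha hc hb hd)

theorem sum_NCPart_eq_ncSum (n : ℕ) :
    ∑ π : NCPart n, ∏ B ∈ π.1.parts, w #B = ncSum w (univ : Finset (Fin n)) ∅ := by
  classical
  simp only [ncSum, ncWeight, isNonCrossingOver_empty_iff]
  rw [← sum_filter]
  symm
  exact sum_subtype (p := IsNonCrossing) _ mem_filter_univ fun P => ∏ B ∈ P.parts, w #B

theorem sum_Nblk_mul_pow (n l : ℕ) (q : R) :
    ∑ k ∈ range (n + 1), (Nblk l n k : R) * q ^ k = ∑ π : NCPart n, q ^ numBlocksOfSize l π := by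
  have hmem (π : NCPart n) (_ : π ∈ univ) : numBlocksOfSize l π ∈ range (n + 1) :=
    mem_range_succ_iff.2 <| (card_filter_le _ _).trans <|
      π.1.card_parts_le_card.trans_eq (card_fin n)
  rw [← sum_fiberwise_of_maps_to hmem]
  refine sum_congr rfl fun k _ => ?_
  have hcard : Nblk l n k = #{π : NCPart n | numBlocksOfSize l π = k} := by
    rw [Nblk, Nat.card_eq_fintype_card, Fintype.card_subtype]
  rw [hcard, ← nsmul_eq_mul, ← sum_const]
  exact sum_congr rfl fun π hπ => by rw [(mem_filter.1 hπ).2]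

theorem sum_Nblk_mul_pow_eq_ncSum (n l : ℕ) (q : R) :
    ∑ k ∈ range (n + 1), (Nblk l n k : R) * q ^ k =
      ncSum (fun s => if s = l then q else 1) (univ : Finset (Fin n)) ∅ := by
  rw [sum_Nblk_mul_pow, ← sum_NCPart_eq_ncSum]
  refine sum_congr rfl fun π _ => ?_
  rw [prod_ite, prod_const, prod_const_one, mul_one, numBlocksOfSize]

end Weights

variable {R : Type*} [CommRing R]

theorem ncExposedSum_eq_coeff (f : R⟦X⟧) (hf : constantCoeff f = 1) (T : Finset α) (r : ℕ) :
    ncExposedSum (fun s => coeff s f) T r =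
      coeff #T (X ^ r * (f ^ #T * (f - X * derivative R f))) := by
  induction T using Finset.induction_on_min generalizing r with
  | empty =>
    cases r <;> simp [ncExposedSum, ncSum_empty, hf]
  | insert b T hT ih =>
    rw [card_insert_of_notMem fun h => (hT b h).false, pow_succ', mul_assoc f,
      coeff_succ_X_pow_mul_mul, coeff_zero_eq_constantCoeff_apply, hf, one_mul]
    simp only [← ih]
    cases r with
    | zero =>
      rw [pow_zero, one_mul, coeff_succ_pow_mul_sub_X_mul_derivative, zero_add,
        ncExposedSum_insert_zero _ hT]
      simp only [zero_add]
    | succ r =>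
      rw [pow_succ', mul_assoc, coeff_succ_X_mul, ← ih, ncExposedSum_insert_succ _ hT]

theorem card_add_one_mul_ncSum (f : R⟦X⟧) (hf : constantCoeff f = 1) (T : Finset α) :
    (#T + 1 : R) * ncSum (fun s => coeff s f) T ∅ = coeff #T (f ^ (#T + 1)) := by
  have h := ncExposedSum_eq_coeff f hf T 0
  simp only [ncExposedSum, powersetCard_zero, sum_singleton, sdiff_empty, pow_zero, one_mul] at h
  rw [h, succ_mul_coeff_pow_mul_sub_X_mul_derivative, add_sub_cancel_left, one_mul]

end NonCrossing

section BlocksOfSize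

variable {R : Type*} [CommRing R]

theorem coeff_mk_one_add_C_mul_X_pow (c : R) (l s : ℕ) :
    coeff s (PowerSeries.mk 1 + C c * X ^ l : R⟦X⟧) = if s = l then 1 + c else 1 := by
  rw [map_add, coeff_mk, coeff_C_mul, coeff_X_pow]
  split_ifs <;> simp

theorem coeff_mk_one_add_C_mul_X_pow_pow (n : ℕ) {l : ℕ} (hl : 1 ≤ l) (c : R) :
    coeff n ((PowerSeries.mk 1 + C c * X ^ l : R⟦X⟧) ^ (n + 1)) =
      ∑ j ∈ range (n + 1) with j * l ≤ n,
        ((n + 1).choose j : R) * c ^ j * ((2 * n - j * (l + 1)).choose (n - j) : R) := by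
  have hterm (j : ℕ) : coeff n ((C c * X ^ l : R⟦X⟧) ^ j * PowerSeries.mk 1 ^ (n + 1 - j) *
      ((n + 1).choose j : R⟦X⟧)) = if j * l ≤ n then ((n + 1).choose j : R) * c ^ j *
        coeff (n - j * l) (PowerSeries.mk 1 ^ (n + 1 - j) : R⟦X⟧) else 0 := by
    rw [mul_pow, ← pow_mul, ← map_pow, mul_comm, ← nsmul_eq_mul, map_nsmul, mul_assoc, coeff_C_mul,
      mul_comm l j, coeff_X_pow_mul', nsmul_eq_mul]
    split_ifs <;> ring
  have hlast : ¬(n + 1) * l ≤ n := by nlinarith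
  rw [add_comm, add_pow, map_sum, sum_congr rfl fun j _ => hterm j, sum_range_succ,
    if_neg hlast, add_zero, sum_filter]
  refine sum_congr rfl fun j hj => ite_congr rfl (fun hjl => ?_) fun _ => rfl
  have hjn : j ≤ n := mem_range_succ_iff.1 hj
  have hsub : 2 * n - j * (l + 1) = n - j + (n - j * l) := by lia
  rw [Nat.sub_add_comm hjn, mk_one_pow_eq_mk_choose_add, coeff_mk, hsub]

theorem lagrange_inversion_blocks_general (n l : ℕ) (hl : 1 ≤ l) (q : R) :
    ((n : R) + 1) * ∑ k ∈ range (n + 1), (Nblk l n k : R) * q ^ k =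
      ∑ j ∈ range (n + 1) with j * l ≤ n,
        ((n + 1).choose j : R) * (q - 1) ^ j * ((2 * n - j * (l + 1)).choose (n - j) : R) := by
  let f : R⟦X⟧ := PowerSeries.mk 1 + C (q - 1) * X ^ l
  have hcoeff (s : ℕ) : coeff s f = if s = l then q else 1 := by
    rw [coeff_mk_one_add_C_mul_X_pow, add_sub_cancel]
  have hf : constantCoeff f = 1 := by
    rw [← coeff_zero_eq_constantCoeff_apply, hcoeff, if_neg (by omega)]
  have h := card_add_one_mul_ncSum f hf (univ : Finset (Fin n))
  simp only [hcoeff, card_fin] at h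
  rw [sum_Nblk_mul_pow_eq_ncSum, h, coeff_mk_one_add_C_mul_X_pow_pow n hl]

end BlocksOfSize

end Development

/-- For `n ≥ 0` and `l ≥ 1`, as an identity of polynomials in `q` over `ℚ`:
`(n + 1)·Σ_{k=0}^{n} N^{(l)}_{n,k} q^k
  = Σ_{j≥0, jl ≤ n} binom(n+1, j)·(q − 1)^j·binom(2n − j(l+1), n − j)`
(the Lagrange-inversion formula for `C^{(l)}_n(q)` written out explicitly). -/
theorem lagrange_inversion_blocks (n l : ℕ) (hl : 1 ≤ l) :
    ((n : Polynomial ℚ) + 1) *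
        ∑ k ∈ Finset.range (n + 1), Polynomial.C ((Nblk l n k : ℚ)) * Polynomial.X ^ k =
      ∑ j ∈ (Finset.range (n + 1)).filter (fun j => j * l ≤ n),
        Polynomial.C ((Nat.choose (n + 1) j : ℚ)) * (Polynomial.X - 1) ^ j *
          Polynomial.C ((Nat.choose (2 * n - j * (l + 1)) (n - j) : ℚ)) := by
  simpa using lagrange_inversion_blocks_general n l hl (Polynomial.X : Polynomial ℚ)
end
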